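/- arXiv:1209.3381 — 2 statements merged into one kernel-verified Lean document; each statement's English description precedes it below -/
import Mathlib

section
/- Assume: s_{ij}(ω) > 0 for all ω, i, j; ω ↦ ln⁺M(ω) ∈ L₁(ℙ) where M(ω) := max_{i,j} s_{ij}(ω); for each i = 1,…,N the functions ω ↦ ln M_{c,i}(ω) − ln m_{c,i}(ω) and ω ↦ ln M_{r,i}(ω) − ln m_{r,i}(ω) belong to L₁(ℙ); and moreover either ω ↦ ln⁻m_r(ω) ∈ L₁(ℙ) or ω ↦ ln⁻m_c(ω) ∈ L₁(ℙ), where m_r(ω) := min_i Σ_j s_{ij}(ω) and m_c(ω) := min_j Σ_i s_{ij}(ω). Then the generalized principal Lyapunov exponent is finite; equivalently, the ℙ-almost-sure constant limit λ̃₁ := lim_{n→∞} (1/n) ln‖S^{(n)}(ω)‖ (which exists in [−∞, ∞) by the subadditive ergodic theorem) satisfies λ̃₁ > −∞. -/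
open MeasureTheory Matrix Filter

/-- The Euclidean norm on `Fin N → ℝ`. -/
noncomputable def enorm' {N : ℕ} (u : Fin N → ℝ) : ℝ := Real.sqrt (∑ i, (u i) ^ 2)

/-- `ln⁺ x = max (ln x) 0`; `ln⁻ x = max (−ln x) 0`. -/
noncomputable def lnplus (x : ℝ) : ℝ := max (Real.log x) 0

noncomputable def lnminus (x : ℝ) : ℝ := max (-Real.log x) 0

/-- The operator norm of a matrix with respect to the Euclidean norm. -/
noncomputable def eopNorm {N : ℕ} (M : Matrix (Fin N) (Fin N) ℝ) : ℝ :=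
  sSup {c : ℝ | ∃ u : Fin N → ℝ, enorm' u ≤ 1 ∧ c = enorm' (M.mulVec u)}

/-- The cocycle products `S⁽ⁿ⁾(ω) = S(θ^{n-1}ω) ⋯ S(θω) S(ω)`, `S⁽⁰⁾(ω) = Id`. -/
noncomputable def Sprod {Ω : Type*} {N : ℕ} (θ : Equiv.Perm Ω)
    (S : Ω → Matrix (Fin N) (Fin N) ℝ) : ℕ → Ω → Matrix (Fin N) (Fin N) ℝ
  | 0, _ => 1
  | n + 1, ω => Sprod θ S n (θ ω) * S ω

/-!
Let `|A|` be the sum of the entries of `A`. For nonnegative matrices `|A B| ≤ |A| |B|`, so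
`aₙ = ln |S⁽ⁿ⁾|` is a subadditive cocycle. Conversely, if any two entries in a common row of `A`
have ratio at most `κ`, a property inherited by all left multiples of `A`, then
`|A| |B| ≤ N κ |A B|`. Hence `k - aₙ` is also a subadditive cocycle, with
`k = ln N + ∑ᵢ (ln M_{r,i} - ln m_{r,i})` integrable.

For a subadditive cocycle `a` over an ergodic map with `γ n ≤ ∫ aₙ` for all `n`, almost surely
`lim inf aₙ / n ≥ γ`. Otherwise, for some `c < γ`, almost every orbit splits into blocks of length
`j` on which `aⱼ ≤ c j`; up to a small exceptional set the lengths are bounded, and integrating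
gives `γ ≤ c`. Applied to both `a` and `k - a`, with the number `γ` for which
`γ n ≤ ∫ aₙ ≤ γ n + ∫ k`, this makes `aₙ / n` converge to `γ`.
-/

section SubadditiveSequence

lemma exists_forall_mul_le_and_le_mul_add_of_subadditive {u : ℕ → ℝ} {K : ℝ}
    (hu : Subadditive u) (hKu : Subadditive fun n => K - u n) :
    ∃ γ : ℝ, ∀ n : ℕ, γ * n ≤ u n ∧ u n ≤ γ * n + K := by
  have hu0 : 0 ≤ u 0 := by linarith [hu 0 0]
  have hKu0 : u 0 ≤ K := by linarith [hKu 0 0]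
  have slope_le : ∀ m n : ℕ,
      (u (m + 1) - K) / ((m + 1 : ℕ) : ℝ) ≤ u (n + 1) / ((n + 1 : ℕ) : ℝ) := by
    intro m n
    have upper := hu.apply_mul_add_le m (n + 1) (n + 1)
    have lower := hKu.apply_mul_add_le n (m + 1) (m + 1)
    rw [show n * (m + 1) + (m + 1) = m * (n + 1) + (n + 1) by ring] at lower
    rw [div_le_div_iff₀ (by positivity) (by positivity)]
    push_cast
    linarith
  obtain ⟨γ, hγ_ge, hγ_le⟩ := exists_between_of_forall_le
    (Set.range_nonempty fun m : ℕ => (u (m + 1) - K) / ((m + 1 : ℕ) : ℝ))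
    (Set.range_nonempty fun n : ℕ => u (n + 1) / ((n + 1 : ℕ) : ℝ))
    (by rintro _ ⟨m, rfl⟩ _ ⟨n, rfl⟩; exact slope_le m n)
  refine ⟨γ, fun n => ?_⟩
  cases n with
  | zero => simpa using ⟨hu0, hKu0⟩
  | succ n =>
    have hn : (0 : ℝ) < (n + 1 : ℕ) := by positivity
    have h_ge := (div_le_iff₀ hn).1 (hγ_ge ⟨n, rfl⟩)
    have h_le := (le_div_iff₀ hn).1 (hγ_le ⟨n, rfl⟩)
    exact ⟨h_le, by linarith⟩

end SubadditiveSequence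

section MeasurePreserving

variable {α β E : Type*} [MeasurableSpace α] [MeasurableSpace β] {μ : Measure α} {ν : Measure β}
  [NormedAddCommGroup E]

lemma integral_comp_of_measurePreserving [NormedSpace ℝ E] {T : α → β}
    (hT : MeasurePreserving T μ ν) {f : β → E} (hf : AEStronglyMeasurable f ν) :
    ∫ x, f (T x) ∂μ = ∫ y, f y ∂ν := by
  rw [← hT.map_eq] at hf ⊢
  exact (integral_map hT.aemeasurable hf).symm

variable {T : α → α} (hT : MeasurePreserving T μ μ)
include hT

lemma integrable_birkhoffSum {f : α → E} (hf : Integrable f μ) (n : ℕ) :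
    Integrable (birkhoffSum T f n) μ :=
  integrable_finsetSum _ fun i _ => (hT.iterate i).integrable_comp_of_integrable hf

lemma integral_birkhoffSum [NormedSpace ℝ E] {f : α → E} (hf : Integrable f μ) (n : ℕ) :
    ∫ x, birkhoffSum T f n x ∂μ = n • ∫ x, f x ∂μ := by
  have hfT : ∀ i, Integrable (fun x => f (T^[i] x)) μ := fun i =>
    (hT.iterate i).integrable_comp_of_integrable hf
  simp only [birkhoffSum]
  rw [integral_finsetSum _ fun i _ => hfT i]
  simp [integral_comp_of_measurePreserving (hT.iterate _) hf.aestronglyMeasurable]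

end MeasurePreserving

/-- A subadditive cocycle over `T`, in the sense of Kingman's ergodic theorem:
`a (m + n) ≤ a m + a n ∘ T^m` everywhere, including at the indices `m = 0` and `n = 0`. -/
def IsSubadditiveCocycle {Ω : Type*} (T : Ω → Ω) (a : ℕ → Ω → ℝ) : Prop :=
  ∀ m n ω, a (m + n) ω ≤ a m ω + a n (T^[m] ω)

namespace IsSubadditiveCocycle

variable {Ω : Type*} {T : Ω → Ω} {a : ℕ → Ω → ℝ} (ha : IsSubadditiveCocycle T a)

include ha in
-- Cut the orbit into blocks of length at most `L` until fewer than `L` points are left.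
lemma exists_le_birkhoffSum_add {h : Ω → ℝ} {L : ℕ}
    (hblock : ∀ ω, ∃ j, 0 < j ∧ j ≤ L ∧ a j ω ≤ birkhoffSum T h j ω) (n : ℕ) (ω : Ω) :
    ∃ r < L, r ≤ n ∧ a n ω ≤ birkhoffSum T h (n - r) ω + a r (T^[n - r] ω) := by
  induction n using Nat.strong_induction_on generalizing ω with
  | _ n ih =>
  rcases lt_or_ge n L with hn | hn
  · exact ⟨n, hn, le_rfl, by simp⟩
  · obtain ⟨j, hj0, hjL, hj⟩ := hblock ω
    obtain ⟨r, hrL, hrn, hr⟩ := ih (n - j) (by omega) (T^[j] ω)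
    refine ⟨r, hrL, by omega, ?_⟩
    have hsub := ha j (n - j) ω
    rw [show j + (n - j) = n by omega] at hsub
    rw [← Function.iterate_add_apply, show n - j - r + j = n - r by omega] at hr
    rw [show n - r = j + (n - j - r) by omega, birkhoffSum_add,
      show j + (n - j - r) = n - r by omega]
    linarith

include ha in
lemma le_birkhoffSum_add_sum_abs {h : Ω → ℝ} {L : ℕ}
    (hblock : ∀ ω, ∃ j, 0 < j ∧ j ≤ L ∧ a j ω ≤ birkhoffSum T h j ω) (n : ℕ) (ω : Ω) :
    a n ω ≤ birkhoffSum T h n ω +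
      ∑ r ∈ Finset.range L, |a r (T^[n - r] ω) - birkhoffSum T h r (T^[n - r] ω)| := by
  obtain ⟨r, hrL, hrn, hr⟩ := ha.exists_le_birkhoffSum_add hblock n ω
  have hsum := birkhoffSum_add T h (n - r) r ω
  rw [Nat.sub_add_cancel hrn] at hsum
  have habs := le_abs_self (a r (T^[n - r] ω) - birkhoffSum T h r (T^[n - r] ω))
  have hsingle := Finset.single_le_sum
    (f := fun r => |a r (T^[n - r] ω) - birkhoffSum T h r (T^[n - r] ω)|)
    (fun _ _ => abs_nonneg _) (Finset.mem_range.2 hrL)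
  linarith

variable [MeasurableSpace Ω] {μ : Measure Ω}

include ha in
lemma integrable (hT : MeasurePreserving T μ μ) {k : Ω → ℝ} (hk : Integrable k μ)
    (hka : IsSubadditiveCocycle T fun n ω => k ω - a n ω) (ham : ∀ n, Measurable (a n))
    (ha1 : Integrable (a 1) μ) (n : ℕ) : Integrable (a n) μ := by
  induction n with
  | zero =>
    refine integrable_of_le_of_le (ham 0).aestronglyMeasurable (.of_forall fun ω => ?_)
      (.of_forall fun ω => ?_) (integrable_zero Ω ℝ μ) hk
    · simpa using ha 0 0 ω
    · simpa using hka 0 0 ω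
  | succ n ih =>
    have hanT := hT.integrable_comp_of_integrable ih
    have hkT := hT.integrable_comp_of_integrable hk
    refine integrable_of_le_of_le (ham _).aestronglyMeasurable (.of_forall fun ω => ?_)
      (.of_forall fun ω => ?_) ((ha1.add hanT).sub hkT) (ha1.add hanT)
    · have h := hka 1 n ω
      rw [add_comm 1 n, Function.iterate_one] at h
      simp only [Pi.add_apply, Pi.sub_apply, Function.comp_apply]
      linarith
    · have h := ha 1 n ω
      rwa [add_comm 1 n] at h

include ha in
lemma subadditive_integral (hT : MeasurePreserving T μ μ) (hai : ∀ n, Integrable (a n) μ) :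
    Subadditive fun n => ∫ ω, a n ω ∂μ := by
  intro m n
  have hanT : Integrable (fun ω => a n (T^[m] ω)) μ :=
    (hT.iterate m).integrable_comp_of_integrable (hai n)
  calc ∫ ω, a (m + n) ω ∂μ ≤ ∫ ω, a m ω + a n (T^[m] ω) ∂μ :=
        integral_mono (hai _) ((hai m).add hanT) (ha m n)
    _ = ∫ ω, a m ω ∂μ + ∫ ω, a n ω ∂μ := by
        rw [integral_add (hai m) hanT, integral_comp_of_measurePreserving (hT.iterate m)
          (hai n).aestronglyMeasurable]

variable (hai : ∀ n, Integrable (a n) μ) {γ : ℝ} (hγ : ∀ n : ℕ, γ * n ≤ ∫ ω, a n ω ∂μ)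

include ha hai hγ

lemma le_integral_of_forall_exists_le_birkhoffSum (hT : MeasurePreserving T μ μ) {h : Ω → ℝ}
    (hh : Integrable h μ) {L : ℕ}
    (hblock : ∀ ω, ∃ j, 0 < j ∧ j ≤ L ∧ a j ω ≤ birkhoffSum T h j ω) :
    γ ≤ ∫ ω, h ω ∂μ := by
  set C := ∑ r ∈ Finset.range L, ∫ ω, |a r ω - birkhoffSum T h r ω| ∂μ with hC
  have hrem : ∀ r, Integrable (fun ω => |a r ω - birkhoffSum T h r ω|) μ := fun r =>
    ((hai r).sub (integrable_birkhoffSum hT hh r)).abs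
  have hremT : ∀ n r, Integrable
      (fun ω => |a r (T^[n - r] ω) - birkhoffSum T h r (T^[n - r] ω)|) μ := fun n r =>
    (hT.iterate (n - r)).integrable_comp_of_integrable (hrem r)
  have hlinear : ∀ n : ℕ, γ * n ≤ n * ∫ ω, h ω ∂μ + C := by
    intro n
    have hmono := integral_mono (hai n) ((integrable_birkhoffSum hT hh n).add
      (integrable_finsetSum _ fun r _ => hremT n r)) (ha.le_birkhoffSum_add_sum_abs hblock n)
    refine (hγ n).trans (hmono.trans_eq ?_)
    simp only [Pi.add_apply]
    rw [integral_add (integrable_birkhoffSum hT hh n)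
      (integrable_finsetSum _ fun r _ => hremT n r), integral_birkhoffSum hT hh, nsmul_eq_mul,
      integral_finsetSum _ fun r _ => hremT n r, hC]
    congr 1
    exact Finset.sum_congr rfl fun r _ =>
      integral_comp_of_measurePreserving (hT.iterate (n - r)) (hrem r).aestronglyMeasurable
  by_contra! hlt
  obtain ⟨n, hn⟩ := exists_nat_gt (C / (γ - ∫ ω, h ω ∂μ))
  rw [div_lt_iff₀ (sub_pos.2 hlt)] at hn
  linarith [hlinear n]

variable [IsProbabilityMeasure μ] (ham : ∀ n, Measurable (a n))

include ham

lemma le_of_ae_exists_le (hT : MeasurePreserving T μ μ) {c : ℝ}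
    (hc : ∀ᵐ ω ∂μ, ∃ n : ℕ, 0 < n ∧ a n ω ≤ c * n) : γ ≤ c := by
  let B : ℕ → Set Ω := fun L => {ω | ∀ j : ℕ, 0 < j → j ≤ L → c * j < a j ω}
  have hBmeas : ∀ L, MeasurableSet (B L) := fun L => by
    simp only [B, Set.ofPred_forall]
    exact .iInter fun j => .iInter fun _ => .iInter fun _ =>
      measurableSet_lt measurable_const (ham j)
  have hBanti : Antitone B := fun L L' hL ω hω j hj0 hjL => hω j hj0 (hjL.trans hL)
  have hBnull : μ (⋂ L, B L) = 0 := by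
    refine measure_mono_null (fun ω hω => ?_) (ae_iff.1 hc)
    rintro ⟨n, hn0, hn⟩
    exact hn.not_gt (Set.mem_iInter.1 hω n n hn0 le_rfl)
  have hexcess : Integrable (fun ω => |a 1 ω - c|) μ := ((hai 1).sub (integrable_const c)).abs
  have hbound : ∀ L, 0 < L → γ ≤ c + ∫ ω in B L, |a 1 ω - c| ∂μ := by
    intro L hL
    have hind := hexcess.indicator (hBmeas L)
    rw [← integral_indicator (hBmeas L)]
    have key := ha.le_integral_of_forall_exists_le_birkhoffSum hai hγ hT (L := L)
      ((integrable_const c).add hind) fun ω => ?_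
    · simpa [integral_add (integrable_const c) hind] using key
    by_cases hω : ω ∈ B L
    · refine ⟨1, one_pos, hL, ?_⟩
      simp only [birkhoffSum_one, Pi.add_apply, Set.indicator_of_mem hω]
      linarith [le_abs_self (a 1 ω - c)]
    · simp only [B, Set.mem_ofPred_eq, not_forall, not_lt] at hω
      obtain ⟨j, hj0, hjL, hj⟩ := hω
      refine ⟨j, hj0, hjL, hj.trans ?_⟩
      calc c * j = ∑ _i ∈ Finset.range j, c := by simp [mul_comm]
        _ ≤ birkhoffSum T _ j ω := Finset.sum_le_sum fun i _ =>
          le_add_of_nonneg_right (Set.indicator_nonneg (fun _ _ => abs_nonneg _) _)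
  have hlim := tendsto_setIntegral_of_antitone hBmeas hBanti ⟨0, hexcess.integrableOn⟩
  rw [setIntegral_measure_zero _ hBnull] at hlim
  have hlim' := hlim.const_add c
  rw [add_zero] at hlim'
  exact ge_of_tendsto hlim' (eventually_atTop.2 ⟨1, hbound⟩)

lemma ae_tendsto_sub_mul_atTop (hT : Ergodic T μ) {c : ℝ} (hc : c < γ) :
    ∀ᵐ ω ∂μ, Tendsto (fun n : ℕ => a n ω - c * n) atTop atTop := by
  let E : Set Ω := {ω | Tendsto (fun n : ℕ => a n ω - c * n) atTop atTop}
  have hEmeas : MeasurableSet E := measurableSet_tendsto _ fun n => (ham n).sub_const _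
  have hEinv : E ⊆ T ⁻¹' E := by
    intro ω hω
    refine tendsto_atTop_mono (fun n => ?_)
      ((hω.comp (tendsto_add_atTop_nat 1)).atTop_add (tendsto_const_nhds (x := c - a 1 ω)))
    have h := ha 1 n ω
    rw [add_comm 1 n, Function.iterate_one] at h
    simp only [Function.comp_apply, Nat.cast_add, Nat.cast_one]
    linarith
  rcases hT.ae_empty_or_univ_of_ae_le_preimage hEmeas.nullMeasurableSet
    (LE.le.eventuallyLE hEinv) with hE | hE
  · exfalso
    obtain ⟨q, hcq, hqγ⟩ := exists_between hc
    refine hqγ.not_ge (ha.le_of_ae_exists_le hai hγ ham hT.toMeasurePreserving ?_)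
    filter_upwards [ae_eq_empty.1 hE |> measure_eq_zero_iff_ae_notMem.1] with ω hω
    by_contra! hlarge
    refine hω (tendsto_atTop_mono' _ ?_
      (tendsto_natCast_atTop_atTop.const_mul_atTop (sub_pos.2 hcq)))
    filter_upwards [eventually_gt_atTop 0] with n hn
    linarith [hlarge n hn]
  · exact eventuallyEq_univ.1 hE

lemma ae_forall_lt_tendsto_sub_mul_atTop (hT : Ergodic T μ) :
    ∀ᵐ ω ∂μ, ∀ c < γ, Tendsto (fun n : ℕ => a n ω - c * n) atTop atTop := by
  have hrat : ∀ᵐ ω ∂μ, ∀ q : ℚ, (q : ℝ) < γ →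
      Tendsto (fun n : ℕ => a n ω - q * n) atTop atTop := by
    simp only [ae_all_iff]
    exact fun q hq => ha.ae_tendsto_sub_mul_atTop hai hγ ham hT hq
  filter_upwards [hrat] with ω hω c hc
  obtain ⟨q, hcq, hqγ⟩ := exists_rat_btwn hc
  exact tendsto_atTop_mono (fun n => by gcongr) (hω q hqγ)

end IsSubadditiveCocycle

theorem exists_ae_tendsto_inv_mul_of_isSubadditiveCocycle {Ω : Type*} [MeasurableSpace Ω]
    {μ : Measure Ω} [IsProbabilityMeasure μ] {T : Ω → Ω} (hT : Ergodic T μ) {a : ℕ → Ω → ℝ}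
    {k : Ω → ℝ} (ha : IsSubadditiveCocycle T a)
    (hka : IsSubadditiveCocycle T fun n ω => k ω - a n ω) (ham : ∀ n, Measurable (a n))
    (hkm : Measurable k) (ha1 : Integrable (a 1) μ) (hk : Integrable k μ) :
    ∃ γ : ℝ, ∀ᵐ ω ∂μ, Tendsto (fun n : ℕ => (n : ℝ)⁻¹ * a n ω) atTop (nhds γ) := by
  have hTmp := hT.toMeasurePreserving
  have hai := ha.integrable hTmp hk hka ham ha1
  have hkai : ∀ n, Integrable (fun ω => k ω - a n ω) μ := fun n => hk.sub (hai n)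
  have hint : ∀ n, ∫ ω, k ω - a n ω ∂μ = ∫ ω, k ω ∂μ - ∫ ω, a n ω ∂μ := fun n =>
    integral_sub hk (hai n)
  have hsub := hka.subadditive_integral hTmp hkai
  simp only [hint] at hsub
  obtain ⟨γ, hγ⟩ := exists_forall_mul_le_and_le_mul_add_of_subadditive
    (ha.subadditive_integral hTmp hai) hsub
  have hlower := ha.ae_forall_lt_tendsto_sub_mul_atTop hai (fun n => (hγ n).1) ham hT
  have hupper := hka.ae_forall_lt_tendsto_sub_mul_atTop hkai (γ := -γ)
    (fun n => by linarith [hint n, (hγ n).2]) (fun n => hkm.sub (ham n)) hT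
  refine ⟨γ, ?_⟩
  filter_upwards [hlower, hupper] with ω hω_lower hω_upper
  refine tendsto_order.2 ⟨fun c hc => ?_, fun c hc => ?_⟩
  · filter_upwards [(hω_lower c hc).eventually_gt_atTop 0, eventually_gt_atTop 0] with n hn hn0
    rw [inv_mul_eq_div, lt_div_iff₀ (Nat.cast_pos.2 hn0)]
    linarith
  · filter_upwards [(hω_upper (-c) (neg_lt_neg hc)).eventually_gt_atTop (k ω),
      eventually_gt_atTop 0] with n hn hn0
    rw [inv_mul_eq_div, div_lt_iff₀ (Nat.cast_pos.2 hn0)]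
    linarith

section EntrySum

variable {m n p R : Type*} [Fintype m] [Fintype n]

/-- The sum of all entries of a matrix. On nonnegative matrices it is comparable to every matrix
norm. -/
def entrySum [AddCommMonoid R] (A : Matrix m n R) : R := ∑ i, ∑ j, A i j

lemma entrySum_transpose [AddCommMonoid R] (A : Matrix m n R) : entrySum Aᵀ = entrySum A :=
  Finset.sum_comm

lemma entrySum_one [AddCommMonoidWithOne R] [DecidableEq n] :
    entrySum (1 : Matrix n n R) = Fintype.card n := by
  simp [entrySum, Matrix.one_apply]

lemma entrySum_mul [Fintype p] [NonUnitalSemiring R] (A : Matrix m n R) (B : Matrix n p R) :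
    entrySum (A * B) = ∑ j, (∑ i, A i j) * ∑ l, B j l := by
  simp only [entrySum, Matrix.mul_apply, Finset.sum_mul_sum]
  calc ∑ i, ∑ l, ∑ j, A i j * B j l = ∑ i, ∑ j, ∑ l, A i j * B j l :=
        Finset.sum_congr rfl fun _ _ => Finset.sum_comm
    _ = ∑ j, ∑ i, ∑ l, A i j * B j l := Finset.sum_comm

lemma entrySum_mul_le [Fintype p] [Semiring R] [PartialOrder R] [IsOrderedRing R] {A : Matrix m n R}
    {B : Matrix n p R} (hA : ∀ i j, 0 ≤ A i j) (hB : ∀ i j, 0 ≤ B i j) :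
    entrySum (A * B) ≤ entrySum A * entrySum B := by
  rw [entrySum_mul, ← entrySum_transpose A, entrySum, Finset.sum_mul]
  refine Finset.sum_le_sum fun j _ => ?_
  refine mul_le_mul_of_nonneg_left ?_ (Finset.sum_nonneg fun i _ => hA i j)
  exact Finset.single_le_sum (f := fun j => ∑ l, B j l)
    (fun i _ => Finset.sum_nonneg fun l _ => hB i l) (Finset.mem_univ j)

lemma entrySum_le_of_forall_le [Semiring R] [PartialOrder R] [IsOrderedRing R]
    {A : Matrix m n R} {b : R} (hA : ∀ i j, A i j ≤ b) :
    entrySum A ≤ Fintype.card m * Fintype.card n * b := by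
  calc entrySum A ≤ ∑ _i : m, ∑ _j : n, b :=
        Finset.sum_le_sum fun i _ => Finset.sum_le_sum fun j _ => hA i j
    _ = Fintype.card m * Fintype.card n * b := by simp [mul_assoc]

end EntrySum

/-- The focusing condition that any two entries in a common row of `A` have ratio at most `κ`. -/
def HasRowRatioLE {m n R : Type*} [Mul R] [LE R] (κ : R) (A : Matrix m n R) : Prop :=
  ∀ i j k, A i j ≤ κ * A i k

namespace HasRowRatioLE

variable {m n p R : Type*} [Fintype n] [CommSemiring R] [PartialOrder R] [IsOrderedRing R]

lemma mul_left {κ : R} {A : Matrix n p R} (hA : HasRowRatioLE κ A)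
    {C : Matrix m n R} (hC : ∀ i j, 0 ≤ C i j) : HasRowRatioLE κ (C * A) := by
  intro i j k
  simp only [Matrix.mul_apply, Finset.mul_sum]
  refine Finset.sum_le_sum fun l _ => ?_
  calc C i l * A l j ≤ C i l * (κ * A l k) := mul_le_mul_of_nonneg_left (hA l j k) (hC i l)
    _ = κ * (C i l * A l k) := by ring

lemma entrySum_mul_entrySum_le [Fintype m] [Fintype p] {κ : R} {A : Matrix m n R}
    (hA : HasRowRatioLE κ A) {B : Matrix n p R} (hB : ∀ i j, 0 ≤ B i j) :
    entrySum A * entrySum B ≤ Fintype.card n * κ * entrySum (A * B) := by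
  have hcolumn : ∀ j, entrySum A ≤ Fintype.card n * κ * ∑ i, A i j := by
    intro j
    calc entrySum A ≤ ∑ i, ∑ _k : n, κ * A i j :=
          Finset.sum_le_sum fun i _ => Finset.sum_le_sum fun k _ => hA i k j
      _ = Fintype.card n * κ * ∑ i, A i j := by simp [Finset.mul_sum, mul_assoc]
  calc entrySum A * entrySum B = ∑ j, entrySum A * ∑ l, B j l := Finset.mul_sum _ _ _
    _ ≤ ∑ j, Fintype.card n * κ * (∑ i, A i j) * ∑ l, B j l := Finset.sum_le_sum fun j _ =>
        mul_le_mul_of_nonneg_right (hcolumn j) (Finset.sum_nonneg fun l _ => hB j l)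
    _ = Fintype.card n * κ * entrySum (A * B) := by
        rw [entrySum_mul, Finset.mul_sum]
        exact Finset.sum_congr rfl fun j _ => mul_assoc _ _ _

end HasRowRatioLE

section RowOscillation

variable {m n : Type*} [Fintype m] [Finite n]

lemma iInf_pos_of_forall_pos [Nonempty n] {f : n → ℝ} (hf : ∀ j, 0 < f j) : 0 < ⨅ j, f j := by
  obtain ⟨j, hj⟩ := exists_eq_ciInf_of_finite (f := f)
  exact hj ▸ hf j

lemma log_sub_log_le_log_iSup_sub_log_iInf {f : n → ℝ} (hf : ∀ j, 0 < f j) (j k : n) :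
    Real.log (f j) - Real.log (f k) ≤ Real.log (⨆ j, f j) - Real.log (⨅ j, f j) := by
  have : Nonempty n := ⟨j⟩
  exact sub_le_sub (Real.log_le_log (hf j) (le_ciSup (Finite.bddAbove_range f) j))
    (Real.log_le_log (iInf_pos_of_forall_pos hf) (ciInf_le (Finite.bddBelow_range f) k))

/-- The total logarithmic oscillation `∑ᵢ (ln M_{r,i} - ln m_{r,i})` along the rows of a
matrix. -/
noncomputable def logRowOsc (A : Matrix m n ℝ) : ℝ :=
  ∑ i, (Real.log (⨆ j, A i j) - Real.log (⨅ j, A i j))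

lemma hasRowRatioLE_exp_logRowOsc {A : Matrix m n ℝ} (hA : ∀ i j, 0 < A i j) :
    HasRowRatioLE (Real.exp (logRowOsc A)) A := by
  intro i j k
  have hosc : Real.log (A i j) - Real.log (A i k) ≤ logRowOsc A :=
    (log_sub_log_le_log_iSup_sub_log_iInf (hA i) j k).trans <| Finset.single_le_sum
      (f := fun i => Real.log (⨆ j, A i j) - Real.log (⨅ j, A i j))
      (fun i _ => by simpa using log_sub_log_le_log_iSup_sub_log_iInf (hA i) j j)
      (Finset.mem_univ i)
  rw [← Real.log_le_log_iff (hA i j) (mul_pos (Real.exp_pos _) (hA i k)),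
    Real.log_mul (Real.exp_pos _).ne' (hA i k).ne', Real.log_exp]
  linarith

lemma logRowOsc_nonneg [Nonempty n] {A : Matrix m n ℝ} (hA : ∀ i j, 0 < A i j) :
    0 ≤ logRowOsc A :=
  Finset.sum_nonneg fun i _ => by
    simpa using log_sub_log_le_log_iSup_sub_log_iInf (hA i) Classical.ofNonempty
      Classical.ofNonempty

lemma measurable_logRowOsc {Ω : Type*} [MeasurableSpace Ω] {S : Ω → Matrix m n ℝ}
    (hS : ∀ i j, Measurable fun ω => S ω i j) : Measurable fun ω => logRowOsc (S ω) :=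
  Finset.measurable_fun_sum _ fun i _ =>
    (Measurable.iSup fun j => hS i j).log.sub (Measurable.iInf fun j => hS i j).log

end RowOscillation

section MatrixCocycle

variable {Ω ι : Type*} [Fintype ι] [DecidableEq ι]

/-- The products `S (T^(n-1) ω) * ⋯ * S (T ω) * S ω` generated by a matrix-valued map `S` over a
self-map `T` that need not be invertible. -/
def matrixCocycle {R : Type*} [Semiring R] (T : Ω → Ω) (S : Ω → Matrix ι ι R) :
    ℕ → Ω → Matrix ι ι R
  | 0, _ => 1
  | n + 1, ω => matrixCocycle T S n (T ω) * S ω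

lemma matrixCocycle_one {R : Type*} [Semiring R] (T : Ω → Ω) (S : Ω → Matrix ι ι R) :
    matrixCocycle T S 1 = S := by
  funext ω
  simp [matrixCocycle]

lemma matrixCocycle_add {R : Type*} [Semiring R] (T : Ω → Ω) (S : Ω → Matrix ι ι R) (m n : ℕ)
    (ω : Ω) :
    matrixCocycle T S (m + n) ω = matrixCocycle T S n (T^[m] ω) * matrixCocycle T S m ω := by
  induction m generalizing ω with
  | zero => simp [matrixCocycle]
  | succ m ih =>
    rw [Nat.add_right_comm, matrixCocycle, ih, matrixCocycle, Function.iterate_succ_apply,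
      Matrix.mul_assoc]

lemma measurable_matrixCocycle_apply [MeasurableSpace Ω] {T : Ω → Ω} {S : Ω → Matrix ι ι ℝ}
    (hT : Measurable T) (hS : ∀ i j, Measurable fun ω => S ω i j) (n : ℕ) (i j : ι) :
    Measurable fun ω => matrixCocycle T S n ω i j := by
  induction n generalizing i j with
  | zero => exact measurable_const
  | succ n ih =>
    simp only [matrixCocycle, Matrix.mul_apply]
    exact Finset.measurable_fun_sum _ fun k _ => ((ih i k).comp hT).mul (hS k j)

variable {T : Ω → Ω} {S : Ω → Matrix ι ι ℝ} (hS : ∀ ω i j, 0 < S ω i j)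
include hS

lemma matrixCocycle_succ_pos (n : ℕ) (ω : Ω) (i j : ι) : 0 < matrixCocycle T S (n + 1) ω i j := by
  induction n generalizing ω i j with
  | zero => simpa [matrixCocycle_one] using hS ω i j
  | succ n ih =>
    rw [matrixCocycle, Matrix.mul_apply]
    exact Finset.sum_pos (fun k _ => mul_pos (ih _ _ _) (hS _ _ _)) ⟨i, Finset.mem_univ i⟩

lemma matrixCocycle_nonneg (n : ℕ) (ω : Ω) (i j : ι) : 0 ≤ matrixCocycle T S n ω i j := by
  cases n with
  | zero => simp only [matrixCocycle, Matrix.one_apply]; split_ifs <;> norm_num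
  | succ n => exact (matrixCocycle_succ_pos hS n ω i j).le

variable [Nonempty ι]

lemma entrySum_matrixCocycle_pos (n : ℕ) (ω : Ω) : 0 < entrySum (matrixCocycle T S n ω) := by
  cases n with
  | zero => simp [matrixCocycle, entrySum_one, Fintype.card_pos]
  | succ n =>
    exact Finset.sum_pos (fun i _ => Finset.sum_pos
      (fun j _ => matrixCocycle_succ_pos hS n ω i j) Finset.univ_nonempty) Finset.univ_nonempty

-- For `0 < n` the rightmost factor `S ω` passes its row ratio on to the whole product.
lemma entrySum_matrixCocycle_mul_entrySum_le (n : ℕ) (ω : Ω) {B : Matrix ι ι ℝ}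
    (hB : ∀ i j, 0 ≤ B i j) :
    entrySum (matrixCocycle T S n ω) * entrySum B ≤
      Fintype.card ι * Real.exp (logRowOsc (S ω)) * entrySum (matrixCocycle T S n ω * B) := by
  cases n with
  | zero =>
    have hBsum : 0 ≤ entrySum B := Finset.sum_nonneg fun i _ => Finset.sum_nonneg fun j _ => hB i j
    rw [matrixCocycle, entrySum_one, one_mul]
    gcongr
    exact le_mul_of_one_le_right (by positivity) (Real.one_le_exp (logRowOsc_nonneg (hS ω)))
  | succ n =>
    exact ((hasRowRatioLE_exp_logRowOsc (hS ω)).mul_left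
      (matrixCocycle_nonneg hS n (T ω))).entrySum_mul_entrySum_le hB

lemma isSubadditiveCocycle_log_entrySum :
    IsSubadditiveCocycle T fun n ω => Real.log (entrySum (matrixCocycle T S n ω)) := by
  intro m n ω
  have hpos := entrySum_matrixCocycle_pos (T := T) hS
  rw [add_comm (Real.log _), ← Real.log_mul (hpos _ _).ne' (hpos _ _).ne']
  refine Real.log_le_log (hpos _ _) ?_
  rw [matrixCocycle_add]
  exact entrySum_mul_le (matrixCocycle_nonneg hS _ _) (matrixCocycle_nonneg hS _ _)

lemma isSubadditiveCocycle_sub_log_entrySum :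
    IsSubadditiveCocycle T fun n ω => Real.log (Fintype.card ι) + logRowOsc (S ω) -
      Real.log (entrySum (matrixCocycle T S n ω)) := by
  intro m n ω
  have hpos := entrySum_matrixCocycle_pos (T := T) hS
  have hcard : (0 : ℝ) < Fintype.card ι := by exact_mod_cast Fintype.card_pos
  have hmul := entrySum_matrixCocycle_mul_entrySum_le (T := T) hS n (T^[m] ω)
    (matrixCocycle_nonneg (T := T) hS m ω)
  rw [← matrixCocycle_add] at hmul
  have hlog := Real.log_le_log (mul_pos (hpos _ _) (hpos _ _)) hmul
  rw [Real.log_mul (hpos _ _).ne' (hpos _ _).ne',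
    Real.log_mul (mul_pos hcard (Real.exp_pos _)).ne' (hpos _ _).ne',
    Real.log_mul hcard.ne' (Real.exp_pos _).ne', Real.log_exp] at hlog
  linarith

theorem exists_ae_tendsto_inv_mul_log_entrySum [MeasurableSpace Ω] {μ : Measure Ω}
    [IsProbabilityMeasure μ] (hT : Ergodic T μ) (hSmeas : ∀ i j, Measurable fun ω => S ω i j)
    (hlog : Integrable (fun ω => Real.log (entrySum (S ω))) μ)
    (hosc : Integrable (fun ω => logRowOsc (S ω)) μ) :
    ∃ γ : ℝ, ∀ᵐ ω ∂μ, Tendsto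
      (fun n : ℕ => (n : ℝ)⁻¹ * Real.log (entrySum (matrixCocycle T S n ω))) atTop (nhds γ) := by
  refine exists_ae_tendsto_inv_mul_of_isSubadditiveCocycle hT
    (isSubadditiveCocycle_log_entrySum hS) (isSubadditiveCocycle_sub_log_entrySum hS)
    (fun n => Measurable.log ?_) (measurable_const.add (measurable_logRowOsc hSmeas))
    (by simpa only [matrixCocycle_one] using hlog) ((integrable_const _).add hosc)
  exact Finset.measurable_fun_sum _ fun i _ => Finset.measurable_fun_sum _ fun j _ =>
    measurable_matrixCocycle_apply hT.measurable hSmeas n i j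

end MatrixCocycle

section OperatorNorm

variable {N : ℕ}

lemma enorm'_eq_norm_toLp (u : Fin N → ℝ) : enorm' u = ‖WithLp.toLp 2 u‖ := by
  simp [enorm', EuclideanSpace.norm_eq]

lemma abs_apply_le_enorm' (u : Fin N → ℝ) (i : Fin N) : |u i| ≤ enorm' u := by
  rw [enorm'_eq_norm_toLp]
  exact PiLp.norm_apply_le (WithLp.toLp 2 u) i

lemma enorm'_le_sum_abs (u : Fin N → ℝ) : enorm' u ≤ ∑ i, |u i| := by
  refine Real.sqrt_le_iff.2 ⟨by positivity, ?_⟩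
  calc ∑ i, u i ^ 2 = ∑ i, |u i| ^ 2 := by simp only [sq_abs]
    _ ≤ (∑ i, |u i|) ^ 2 := Finset.sum_sq_le_sq_sum_of_nonneg fun i _ => abs_nonneg (u i)

variable {A : Matrix (Fin N) (Fin N) ℝ} (hA : ∀ i j, 0 ≤ A i j)
include hA

lemma enorm'_mulVec_le_entrySum {u : Fin N → ℝ} (hu : enorm' u ≤ 1) :
    enorm' (A *ᵥ u) ≤ entrySum A := by
  calc enorm' (A *ᵥ u) ≤ ∑ i, |∑ j, A i j * u j| := enorm'_le_sum_abs _
    _ ≤ ∑ i, ∑ j, |A i j * u j| := Finset.sum_le_sum fun i _ => Finset.abs_sum_le_sum_abs _ _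
    _ ≤ ∑ i, ∑ j, A i j := Finset.sum_le_sum fun i _ => Finset.sum_le_sum fun j _ => by
        rw [abs_mul, abs_of_nonneg (hA i j)]
        exact mul_le_of_le_one_right (hA i j) ((abs_apply_le_enorm' u j).trans hu)

lemma eopNorm_le_entrySum : eopNorm A ≤ entrySum A := by
  refine csSup_le ⟨_, 0, by simp [enorm'], rfl⟩ ?_
  rintro _ ⟨u, hu, rfl⟩
  exact enorm'_mulVec_le_entrySum hA hu

lemma apply_le_eopNorm (i j : Fin N) : A i j ≤ eopNorm A := by
  have hunit : enorm' (Pi.single j 1 : Fin N → ℝ) ≤ 1 := by simp [enorm'_eq_norm_toLp]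
  have hbdd : BddAbove {c : ℝ | ∃ u : Fin N → ℝ, enorm' u ≤ 1 ∧ c = enorm' (A *ᵥ u)} := by
    refine ⟨entrySum A, ?_⟩
    rintro _ ⟨u, hu, rfl⟩
    exact enorm'_mulVec_le_entrySum hA hu
  calc A i j = (A *ᵥ Pi.single j 1) i := by simp
    _ ≤ enorm' (A *ᵥ Pi.single j 1) := (le_abs_self _).trans (abs_apply_le_enorm' _ i)
    _ ≤ eopNorm A := le_csSup hbdd ⟨_, hunit, rfl⟩

lemma entrySum_le_mul_eopNorm : entrySum A ≤ N * N * eopNorm A := by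
  simpa only [Fintype.card_fin] using entrySum_le_of_forall_le (apply_le_eopNorm hA)

end OperatorNorm

lemma tendsto_inv_mul_log_of_le_of_le_mul {x y : ℕ → ℝ} {C γ : ℝ} (hC : 0 < C)
    (hy : ∀ n, 0 < y n) (hxy : ∀ n, x n ≤ y n) (hyx : ∀ n, y n ≤ C * x n)
    (h : Tendsto (fun n : ℕ => (n : ℝ)⁻¹ * Real.log (y n)) atTop (nhds γ)) :
    Tendsto (fun n : ℕ => (n : ℝ)⁻¹ * Real.log (x n)) atTop (nhds γ) := by
  have hx : ∀ n, 0 < x n := fun n => pos_of_mul_pos_right ((hy n).trans_le (hyx n)) hC.le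
  have hlower := h.sub (tendsto_const_div_atTop_nhds_zero_nat (Real.log C))
  rw [sub_zero] at hlower
  refine tendsto_of_tendsto_of_tendsto_of_le_of_le hlower h (fun n => ?_) (fun n => ?_)
  · have hlog := Real.log_le_log (hy n) (hyx n)
    rw [Real.log_mul hC.ne' (hx n).ne'] at hlog
    rw [div_eq_inv_mul, ← mul_sub]
    gcongr
    linarith
  · have hlog := Real.log_le_log (hx n) (hxy n)
    gcongr

section LogIntegrability

variable {Ω m n : Type*} [MeasurableSpace Ω] {μ : Measure Ω} [IsFiniteMeasure μ] [Fintype m]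
  [Fintype n]

lemma integrable_log_of_le_of_le_mul {f g F : Ω → ℝ} {C : ℝ} (hC : 0 < C) (hf : Measurable f)
    (hg0 : ∀ ω, 0 < g ω) (hgf : ∀ ω, g ω ≤ f ω) (hfF : ∀ ω, f ω ≤ C * F ω)
    (hg : Integrable (fun ω => lnminus (g ω)) μ) (hF : Integrable (fun ω => lnplus (F ω)) μ) :
    Integrable (fun ω => Real.log (f ω)) μ := by
  refine integrable_of_le_of_le hf.log.aestronglyMeasurable (.of_forall fun ω => ?_)
    (.of_forall fun ω => ?_) hg.neg ((integrable_const (Real.log C)).add hF)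
  · have hneg : -Real.log (g ω) ≤ lnminus (g ω) := le_max_left _ _
    exact (neg_le.1 hneg).trans (Real.log_le_log (hg0 ω) (hgf ω))
  · have hf0 : 0 < f ω := (hg0 ω).trans_le (hgf ω)
    have hF0 : 0 < F ω := pos_of_mul_pos_right (hf0.trans_le (hfF ω)) hC.le
    calc Real.log (f ω) ≤ Real.log (C * F ω) := Real.log_le_log hf0 (hfF ω)
      _ = Real.log C + Real.log (F ω) := Real.log_mul hC.ne' hF0.ne'
      _ ≤ Real.log C + lnplus (F ω) := by grw [lnplus, ← le_max_left]

lemma iInf_sum_le_entrySum [Nonempty m] {A : Matrix m n ℝ} (hA : ∀ i j, 0 < A i j) :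
    ⨅ i, ∑ j, A i j ≤ entrySum A :=
  (ciInf_le (Finite.bddBelow_range _) Classical.ofNonempty).trans <|
    Finset.single_le_sum (f := fun i => ∑ j, A i j)
      (fun i _ => Finset.sum_nonneg fun j _ => (hA i j).le) (Finset.mem_univ _)

lemma entrySum_le_mul_iSup_iSup (A : Matrix m n ℝ) :
    entrySum A ≤ Fintype.card m * Fintype.card n * ⨆ i, ⨆ j, A i j :=
  entrySum_le_of_forall_le fun i j => (le_ciSup (Finite.bddAbove_range (A i)) j).trans
    (le_ciSup (Finite.bddAbove_range fun i => ⨆ j, A i j) i)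

lemma integrable_log_entrySum [Nonempty m] [Nonempty n] {S : Ω → Matrix m n ℝ}
    (hSmeas : ∀ i j, Measurable fun ω => S ω i j) (hSpos : ∀ ω i j, 0 < S ω i j)
    (hsup : Integrable (fun ω => lnplus (⨆ i, ⨆ j, S ω i j)) μ)
    (hsum : Integrable (fun ω => lnminus (⨅ i, ∑ j, S ω i j)) μ ∨
      Integrable (fun ω => lnminus (⨅ j, ∑ i, S ω i j)) μ) :
    Integrable (fun ω => Real.log (entrySum (S ω))) μ := by
  have hmeas : Measurable fun ω => entrySum (S ω) :=
    Finset.measurable_fun_sum _ fun i _ => Finset.measurable_fun_sum _ fun j _ => hSmeas i j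
  have hcard : (0 : ℝ) < Fintype.card m * Fintype.card n := by
    exact_mod_cast mul_pos Fintype.card_pos Fintype.card_pos
  rcases hsum with hrow | hcol
  · exact integrable_log_of_le_of_le_mul hcard hmeas
      (fun ω => iInf_pos_of_forall_pos fun i =>
        Finset.sum_pos (fun j _ => hSpos ω i j) Finset.univ_nonempty)
      (fun ω => iInf_sum_le_entrySum (hSpos ω)) (fun ω => entrySum_le_mul_iSup_iSup (S ω)) hrow hsup
  · exact integrable_log_of_le_of_le_mul hcard hmeas
      (fun ω => iInf_pos_of_forall_pos fun j =>
        Finset.sum_pos (fun i _ => hSpos ω i j) Finset.univ_nonempty)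
      (fun ω => (iInf_sum_le_entrySum fun j i => hSpos ω i j).trans_eq (entrySum_transpose (S ω)))
      (fun ω => entrySum_le_mul_iSup_iSup (S ω)) hcol hsup

end LogIntegrability

lemma Sprod_eq_matrixCocycle {Ω : Type*} {N : ℕ} (θ : Equiv.Perm Ω)
    (S : Ω → Matrix (Fin N) (Fin N) ℝ) (n : ℕ) (ω : Ω) :
    Sprod θ S n ω = matrixCocycle θ S n ω := by
  induction n generalizing ω with
  | zero => rfl
  | succ n ih => rw [Sprod, matrixCocycle, ih]

theorem stmt_10_general {N : ℕ} [NeZero N] {Ω : Type*} [MeasurableSpace Ω] {μ : Measure Ω}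
    [IsProbabilityMeasure μ] {T : Ω → Ω} (hT : Ergodic T μ) {S : Ω → Matrix (Fin N) (Fin N) ℝ}
    (hSmeas : ∀ i j, Measurable fun ω => S ω i j) (hSpos : ∀ ω i j, 0 < S ω i j)
    (hlog : Integrable (fun ω => Real.log (entrySum (S ω))) μ)
    (hrow : ∀ i, Integrable
      (fun ω => Real.log (⨆ j, S ω i j) - Real.log (⨅ j, S ω i j)) μ) :
    ∃ lam : ℝ, ∀ᵐ ω ∂μ, Tendsto
      (fun n : ℕ => (n : ℝ)⁻¹ * Real.log (eopNorm (matrixCocycle T S n ω))) atTop (nhds lam) := by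
  have hN : (0 : ℝ) < N := by exact_mod_cast NeZero.pos N
  obtain ⟨lam, hlam⟩ := exists_ae_tendsto_inv_mul_log_entrySum hSpos hT hSmeas hlog
    (integrable_finsetSum _ fun i _ => hrow i)
  refine ⟨lam, ?_⟩
  filter_upwards [hlam] with ω hω
  exact tendsto_inv_mul_log_of_le_of_le_mul (mul_pos hN hN)
    (fun n => entrySum_matrixCocycle_pos hSpos n ω)
    (fun n => eopNorm_le_entrySum (matrixCocycle_nonneg hSpos n ω))
    (fun n => entrySum_le_mul_eopNorm (matrixCocycle_nonneg hSpos n ω)) hω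

/-- Finiteness of the generalized principal Lyapunov exponent:
under the strong focusing conditions plus strong positivity in one direction,
the a.s. constant limit `λ̃₁ = lim (1/n) ln‖S⁽ⁿ⁾(ω)‖` is a (finite) real number. -/
theorem stmt_10 {N : ℕ} (hN : 2 ≤ N)
    {Ω : Type*} [MeasurableSpace Ω] (ℙ : Measure Ω) [IsProbabilityMeasure ℙ]
    (θ : Equiv.Perm Ω) (hθmeas : Measurable θ) (hθinvmeas : Measurable θ.symm)
    (hθmp : MeasurePreserving θ ℙ ℙ) (hθerg : Ergodic (θ : Ω → Ω) ℙ)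
    (S : Ω → Matrix (Fin N) (Fin N) ℝ)
    (hSmeas : ∀ i j, Measurable fun ω => S ω i j)
    (hSpos : ∀ ω i j, 0 < S ω i j)
    (hMint : Integrable (fun ω => lnplus (⨆ i, ⨆ j, S ω i j)) ℙ)
    (hcol : ∀ i : Fin N, Integrable (fun ω =>
      Real.log (⨆ j, S ω j i) - Real.log (⨅ j, S ω j i)) ℙ)
    (hrow : ∀ i : Fin N, Integrable (fun ω =>
      Real.log (⨆ j, S ω i j) - Real.log (⨅ j, S ω i j)) ℙ)
    (hstrongpos :
      Integrable (fun ω => lnminus (⨅ i, ∑ j, S ω i j)) ℙ ∨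
      Integrable (fun ω => lnminus (⨅ j, ∑ i, S ω i j)) ℙ) :
    ∃ lam : ℝ, ∀ᵐ ω ∂ℙ,
      Tendsto (fun n : ℕ => (n : ℝ)⁻¹ * Real.log (eopNorm (Sprod θ S n ω)))
        atTop (nhds lam) := by
  have : NeZero N := ⟨by omega⟩
  simpa only [Sprod_eq_matrixCocycle] using stmt_10_general hθerg hSmeas hSpos
    (integrable_log_entrySum hSmeas hSpos hMint hstrongpos) hrow
end

section
/- Assume S(ω) is a Leslie matrix for every ω (top row (m_1(ω),…,m_N(ω)), subdiagonal entries b_1(ω),…,b_{N−1}(ω), all other entries 0), with m_j(ω) > 0 and b_j(ω) > 0 for all ω and all admissible j, and assume ω ↦ ln⁻m₀(ω) and ω ↦ ln⁺M₀(ω) belong to L₁(ℙ), where m₀(ω) := min{m_1(ω),…,m_N(ω), b_1(ω),…,b_{N−1}(ω)} and M₀(ω) := max{m_1(ω),…,m_N(ω), b_1(ω),…,b_{N−1}(ω)}. Then all entries of the N-fold product S^{(N)}(ω) = S(θ^{N−1}ω)⋯S(ω) are strictly positive for every ω, and there exist a θ-invariant set Ω̃₁ ∈ 𝔉 with ℙ(Ω̃₁)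 = 1, measurable maps w, w* : Ω̃₁ → X⁺⁺ with ‖w(ω)‖ = ‖w*(ω)‖ = 1, a finite constant λ̃₁ ∈ (−∞, ∞), and σ̃ ∈ (0, ∞], such that, with F̃₁(ω) := {u ∈ ℝᴺ : ⟨u, w*(ω)⟩ = 0}, for every ω ∈ Ω̃₁: (i) S(ω)·span{w(ω)} = span{w(θω)} and S(ω)F̃₁(ω) = F̃₁(θω); (ii) F̃₁(ω) ∩ X⁺ = {0}; (iii) lim_{n→∞} (1/n) ln‖S^{(n)}(ω)w(ω)‖ = λ̃₁ and limsup_{n→∞} (1/n) ln‖S^{(n)}(ω)u‖ ≤ λ̃₁ for every u ∈ ℝᴺ ∖ {0}; (iv) lim_{n→∞} (1/n)( ln‖S^{(n)}(ω)∣_{F̃₁(ω)}‖ − ln‖S^{(n)}(ω)w(ω)‖ ) = −σ̃. -/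
open MeasureTheory Matrix Filter

/-- The operator norm of the restriction of a matrix to a subspace `F` (as a set). -/
noncomputable def restrNorm {N : ℕ} (M : Matrix (Fin N) (Fin N) ℝ)
    (F : Set (Fin N → ℝ)) : ℝ :=
  sSup {c : ℝ | ∃ u ∈ F, enorm' u ≤ 1 ∧ c = enorm' (M.mulVec u)}

/-!
If the entries of each column of a positive matrix `A` lie within the factor `κ` of each other, then
`(pA)ⱼ / (sA)ⱼ` is an average of the `pₖ / sₖ` whose weights dominate `κ` times weights that do not
depend on `j`, so passing from `p`, `s` to `pA`, `sA` shrinks the oscillation of the ratio by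
`1 - κ`. Birkhoff's ergodic theorem gives these contractions a positive mean along almost every
orbit. Hence the rows of `S⁽ⁿ⁾(ω)` approach, exponentially fast, the direction of a positive vector
`ws ω`, and the columns of the products ending at `ω` approach that of a positive vector `w ω`. The
line of `w` and the hyperplane normal to `ws` are equivariant. On the hyperplane only the deviation
of the rows from `ws` is felt, so there `S⁽ⁿ⁾` is exponentially smaller than along `w`. The
logarithmic growth along `w` is a Birkhoff sum, which gives the exponent; the norm on the hyperplane
is submultiplicative, which gives the separation rate by Kingman's theorem.
-/

namespace PositiveCocycle

open Set Topology

/-! ### Birkhoff's ergodic theorem -/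

section Ergodic

variable {Ω : Type*} [MeasurableSpace Ω] {μ : Measure Ω} {T : Ω → Ω}

/-- The maximal function `max (S₀, …, Sₙ)` of the Birkhoff sums `S₀ = 0, S₁, S₂, …` of `g`. -/
def birkhoffMax {α : Type*} (T : α → α) (g : α → ℝ) (n : ℕ) (x : α) : ℝ :=
  partialSups (fun k => birkhoffSum T g k x) n

section Max

variable {α : Type*} (T : α → α) (g : α → ℝ)

lemma birkhoffSum_le_birkhoffMax (n : ℕ) (x : α) : birkhoffSum T g n x ≤ birkhoffMax T g n x :=
  le_partialSups (fun k => birkhoffSum T g k x) n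

lemma birkhoffMax_nonneg (n : ℕ) (x : α) : 0 ≤ birkhoffMax T g n x :=
  le_partialSups_of_le (fun k => birkhoffSum T g k x) n.zero_le

lemma monotone_birkhoffMax (x : α) : Monotone fun n => birkhoffMax T g n x :=
  (partialSups fun k => birkhoffSum T g k x).monotone

lemma birkhoffMax_succ (n : ℕ) (x : α) :
    birkhoffMax T g (n + 1) x = max 0 (g x + birkhoffMax T g n (T x)) := by
  have succ_eq_max : ∀ n x, birkhoffMax T g (n + 1) x =
      max (birkhoffMax T g n x) (birkhoffSum T g (n + 1) x) := fun n x => partialSups_succ _ n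
  induction n with
  | zero => rw [succ_eq_max]; simp [birkhoffMax]
  | succ n ih =>
    rw [succ_eq_max, ih, birkhoffSum_succ', max_assoc, max_add_add_left, ← succ_eq_max]

end Max

lemma integrable_birkhoffMax (hT : MeasurePreserving T μ μ) {g : Ω → ℝ} (hg : Integrable g μ)
    (n : ℕ) : Integrable (birkhoffMax T g n) μ := by
  induction n with
  | zero => exact integrable_zero _ _ _
  | succ n ih =>
    refine Integrable.congr ((integrable_zero _ _ _).sup
      (hg.add (hT.integrable_comp_of_integrable ih))) (ae_of_all _ fun ω => ?_)
    exact (birkhoffMax_succ T g n ω).symm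

lemma integral_comp_of_measurePreserving (hT : MeasurePreserving T μ μ) {g : Ω → ℝ}
    (hg : AEStronglyMeasurable g μ) : ∫ ω, g (T ω) ∂μ = ∫ ω, g ω ∂μ := by
  conv_rhs => rw [← hT.map_eq]
  rw [integral_map hT.measurable.aemeasurable (by rwa [hT.map_eq])]

/-- The integrand is the increment `Mₙ₊₁ - Mₙ ∘ T` of the maximal function. -/
lemma integral_max_neg_birkhoffMax_nonneg (hT : MeasurePreserving T μ μ) {g : Ω → ℝ}
    (hg : Integrable g μ) (n : ℕ) :
    0 ≤ ∫ ω, max (-birkhoffMax T g n (T ω)) (g ω) ∂μ := by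
  have increment : ∀ ω, max (-birkhoffMax T g n (T ω)) (g ω) =
      birkhoffMax T g (n + 1) ω - birkhoffMax T g n (T ω) := fun ω => by
    rw [birkhoffMax_succ, ← max_sub_sub_right, zero_sub, add_sub_cancel_right]
  have hint := integrable_birkhoffMax hT hg
  simp_rw [increment]
  have hintT : Integrable (fun ω => birkhoffMax T g n (T ω)) μ :=
    hT.integrable_comp_of_integrable (hint n)
  rw [integral_sub (hint (n + 1)) hintT, integral_comp_of_measurePreserving hT (hint n).1,
    sub_nonneg]
  exact integral_mono (hint n) (hint (n + 1)) fun ω => monotone_birkhoffMax T g ω n.le_succ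

lemma tendsto_integral_max_neg_birkhoffMax (hT : MeasurePreserving T μ μ) {g : Ω → ℝ}
    (hg : Integrable g μ) (hunbdd : ∀ᵐ ω ∂μ, ∀ K : ℕ, ∃ n, K < birkhoffMax T g n ω) :
    Tendsto (fun n => ∫ ω, max (-birkhoffMax T g n (T ω)) (g ω) ∂μ) atTop
      (𝓝 (∫ ω, g ω ∂μ)) := by
  refine tendsto_integral_of_dominated_convergence (fun ω => |g ω|) (fun n => ?_) hg.abs
    (fun n => ae_of_all _ fun ω => ?_) ?_
  · exact ((hT.integrable_comp_of_integrable (integrable_birkhoffMax hT hg n)).neg.sup hg).1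
  · have := birkhoffMax_nonneg T g n (T ω)
    exact abs_le.2 ⟨le_max_of_le_right (neg_abs_le _),
      max_le (by linarith [abs_nonneg (g ω)]) (le_abs_self _)⟩
  · filter_upwards [hT.quasiMeasurePreserving.ae hunbdd] with ω hω
    obtain ⟨K, hK⟩ := exists_nat_gt (-g ω)
    obtain ⟨n, hn⟩ := hω K
    refine tendsto_const_nhds.congr' ?_
    filter_upwards [eventually_ge_atTop n] with k hk
    exact (max_eq_right (by linarith [monotone_birkhoffMax T g (T ω) hk])).symm

lemma ae_bddAbove_birkhoffSum [IsFiniteMeasure μ] (hT : Ergodic T μ) {g : Ω → ℝ}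
    (hg : Integrable g μ) (hneg : ∫ ω, g ω ∂μ < 0) :
    ∀ᵐ ω ∂μ, ∃ K : ℕ, ∀ n, birkhoffSum T g n ω ≤ K := by
  set unbdd : Set Ω := {ω | ∀ K : ℕ, ∃ n, K < birkhoffMax T g n ω} with unbdd_def
  have unbdd_meas : NullMeasurableSet unbdd μ := by
    simp only [unbdd_def, ofPred_forall, ofPred_exists]
    exact .iInter fun K => .iUnion fun n => nullMeasurableSet_lt aemeasurable_const
      (integrable_birkhoffMax hT.toMeasurePreserving hg n).aemeasurable
  have preimage_unbdd : T ⁻¹' unbdd ⊆ unbdd := fun ω hω K => by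
    obtain ⟨K', hK'⟩ := exists_nat_gt (K - g ω)
    obtain ⟨n, hn⟩ := hω K'
    exact ⟨n + 1, by rw [birkhoffMax_succ]; exact lt_max_of_lt_right (by linarith)⟩
  rcases hT.ae_empty_or_univ_of_preimage_ae_le unbdd_meas (.of_forall preimage_unbdd) with
    hnull | hfull
  · filter_upwards [measure_eq_zero_iff_ae_notMem.1 (ae_eq_empty.1 hnull)] with ω hω
    simp only [unbdd_def, mem_ofPred_eq, not_forall, not_exists, not_lt] at hω
    obtain ⟨K, hK⟩ := hω
    exact ⟨K, fun n => (birkhoffSum_le_birkhoffMax T g n ω).trans (hK n)⟩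
  · have := ge_of_tendsto' (tendsto_integral_max_neg_birkhoffMax hT.toMeasurePreserving hg
      (eventuallyEq_univ.1 hfull))
      (integral_max_neg_birkhoffMax_nonneg hT.toMeasurePreserving hg)
    linarith

variable [IsProbabilityMeasure μ]

lemma ae_eventually_birkhoffAverage_lt (hT : Ergodic T μ) {g : Ω → ℝ} (hg : Integrable g μ)
    {a : ℝ} (ha : ∫ ω, g ω ∂μ < a) : ∀ᵐ ω ∂μ, ∀ᶠ n in atTop, birkhoffAverage ℝ T g n ω < a := by
  obtain ⟨c, hc, hca⟩ := exists_between ha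
  have integral_neg : ∫ ω, (g ω - c) ∂μ < 0 := by
    rw [integral_sub hg (integrable_const c)]
    simpa using hc
  filter_upwards [ae_bddAbove_birkhoffSum hT (hg.sub (integrable_const c)) integral_neg]
    with ω ⟨K, hK⟩
  have error_small : ∀ᶠ n : ℕ in atTop, (K : ℝ) / n < a - c :=
    (tendsto_const_div_atTop_nhds_zero_nat (K : ℝ)).eventually_lt_const (sub_pos.2 hca)
  filter_upwards [error_small, eventually_gt_atTop 0] with n hn hn0
  have hn0 : (0 : ℝ) < n := mod_cast hn0
  have sum_le : birkhoffSum T g n ω - n * c ≤ K := by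
    simpa [birkhoffSum, Finset.sum_sub_distrib] using hK n
  rw [div_lt_iff₀ hn0] at hn
  rw [birkhoffAverage, smul_eq_mul, inv_mul_lt_iff₀ hn0]
  linarith

theorem ae_tendsto_birkhoffAverage (hT : Ergodic T μ) {g : Ω → ℝ} (hg : Integrable g μ) :
    ∀ᵐ ω ∂μ, Tendsto (birkhoffAverage ℝ T g · ω) atTop (𝓝 (∫ ω, g ω ∂μ)) := by
  have upper : ∀ {h : Ω → ℝ}, Integrable h μ → ∀ᵐ ω ∂μ, ∀ q : ℚ, ∫ ω, h ω ∂μ < q →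
      ∀ᶠ n in atTop, birkhoffAverage ℝ T h n ω < q := fun hh => by
    simp only [ae_all_iff]
    exact fun q hq => ae_eventually_birkhoffAverage_lt hT hh hq
  filter_upwards [upper hg, upper hg.neg] with ω hg_lt hneg_lt
  refine tendsto_order.2 ⟨fun a ha => ?_, fun a ha => ?_⟩
  · obtain ⟨q, hq, hqa⟩ := exists_rat_btwn (neg_lt_neg ha)
    filter_upwards [hneg_lt q (by simpa [integral_neg] using hq)] with n hn
    rw [birkhoffAverage_neg] at hn
    simp only [Pi.neg_apply] at hn
    linarith
  · obtain ⟨q, hq, hqa⟩ := exists_rat_btwn ha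
    filter_upwards [hg_lt q hq] with n hn using hn.trans hqa

end Ergodic

/-! ### Kingman's subadditive ergodic theorem -/

section Subadditive

/-- `f` is a subadditive process over `T`: `f (m + n) ≤ f m + f n ∘ T^[m]`, at the point `x`. -/
def SubadditiveAt {α : Type*} (T : α → α) (f : ℕ → α → ℝ) (x : α) : Prop :=
  ∀ m n, f (m + n) x ≤ f m x + f n (T^[m] x)

section Pointwise

variable {α : Type*} {T : α → α} {f : ℕ → α → ℝ} {A : Set α}

lemma nonpos_of_subadditiveAt (hA : MapsTo T A A) (hsub : ∀ x ∈ A, SubadditiveAt T f x)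
    (h1 : ∀ x ∈ A, f 1 x ≤ 0) {n : ℕ} (hn : 1 ≤ n) {x : α} (hx : x ∈ A) : f n x ≤ 0 := by
  induction n, hn using Nat.le_induction with
  | base => exact h1 x hx
  | succ n _ ih => linarith [hsub x hx n 1, h1 _ (hA.iterate n hx)]

/-- Cover the orbit segment greedily from the left: at a point outside `B` use a block of length
at most `K` on which the average of `f` is at most `q`, at a point of `B` move one step. -/
lemma le_mul_sub_birkhoffSum_indicator (hA : MapsTo T A A)
    (hsub : ∀ x ∈ A, SubadditiveAt T f x) (h1 : ∀ x ∈ A, f 1 x ≤ 0) {q : ℝ} (hq : q ≤ 0)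
    {K : ℕ} {B : Set α} (hB : ∀ x ∈ A, x ∉ B → ∃ l, 1 ≤ l ∧ l ≤ K ∧ f l x ≤ l * q)
    {n : ℕ} (hn : 1 ≤ n) {x : α} (hx : x ∈ A) :
    f n x ≤ q * (n - K - birkhoffSum T (B.indicator 1) n x) := by
  have sum_nonneg : ∀ n x, 0 ≤ birkhoffSum T (B.indicator (1 : α → ℝ)) n x := fun n x =>
    Finset.sum_nonneg fun i _ => indicator_nonneg (fun _ _ => zero_le_one) _
  induction n using Nat.strong_induction_on generalizing x with
  | _ n ih =>
    rcases le_or_gt n K with hnK | hKn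
    · have : (n : ℝ) ≤ K := mod_cast hnK
      exact (nonpos_of_subadditiveAt hA hsub h1 hn hx).trans
        (mul_nonneg_of_nonpos_of_nonpos hq (by linarith [sum_nonneg n x]))
    by_cases hxB : x ∈ B
    · obtain ⟨k, rfl⟩ := Nat.exists_eq_add_of_le hn
      have sum_eq : birkhoffSum T (B.indicator (1 : α → ℝ)) (1 + k) x =
          1 + birkhoffSum T (B.indicator (1 : α → ℝ)) k (T x) := by
        rw [birkhoffSum_add, birkhoffSum_one, indicator_of_mem hxB]; rfl
      rw [sum_eq]
      rcases k.eq_zero_or_pos with rfl | hk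
      · obtain rfl : K = 0 := by omega
        simpa using h1 x hx
      · have rest := ih k (by omega) hk (hA hx)
        push_cast
        have step : f (1 + k) x ≤ f 1 x + f k (T x) := hsub x hx 1 k
        linarith [h1 x hx]
    · obtain ⟨l, hl1, hlK, hl⟩ := hB x hx hxB
      obtain ⟨k, rfl⟩ := Nat.exists_eq_add_of_le (hlK.trans hKn.le)
      have rest := ih k (by omega) (by omega) (hA.iterate l hx)
      rw [birkhoffSum_add]
      push_cast
      nlinarith [hsub x hx l k, sum_nonneg l x]

lemma liminf_average_le_comp {x : α}
    (hf : ∀ n, f (n + 1) x ≤ f n (T x)) :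
    liminf (fun n : ℕ => (((n : ℝ)⁻¹ * f n x : ℝ) : EReal)) atTop ≤
      liminf (fun n : ℕ => (((n : ℝ)⁻¹ * f n (T x) : ℝ) : EReal)) atTop := by
  refine le_of_forall_gt fun c hc => ?_
  obtain ⟨p, hp, hpc⟩ := EReal.lt_iff_exists_real_btwn.1 hc
  obtain ⟨r, hpr, hrc⟩ := EReal.lt_iff_exists_real_btwn.1 hpc
  have ratio_lt : ∀ᶠ n : ℕ in atTop, (n : ℝ) / (n + 1) * p < r := by
    have := (tendsto_natCast_div_add_atTop (1 : ℝ)).mul_const p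
    rw [one_mul] at this
    exact this.eventually_lt_const (EReal.coe_lt_coe_iff.1 hpr)
  have freq : ∃ᶠ n : ℕ in atTop,
      ((((n + 1 : ℕ) : ℝ)⁻¹ * f (n + 1) x : ℝ) : EReal) ≤ (r : EReal) := by
    refine ((frequently_lt_of_liminf_lt (by isBoundedDefault) hp).and_eventually
      (ratio_lt.and (eventually_gt_atTop 0))).mono fun n ⟨hn, hnr, hn0⟩ => ?_
    have hn0 : (0 : ℝ) < n := mod_cast hn0
    rw [EReal.coe_lt_coe_iff, inv_mul_lt_iff₀ hn0] at hn
    rw [EReal.coe_le_coe_iff, Nat.cast_add_one, inv_mul_le_iff₀ (by positivity)]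
    rw [div_mul_eq_mul_div, div_lt_iff₀ (by positivity)] at hnr
    linarith [hf n]
  exact (liminf_le_of_frequently_le ((tendsto_add_atTop_nat 1).frequently freq)
    (by isBoundedDefault)).trans_lt hrc

end Pointwise

variable {Ω : Type*} [MeasurableSpace Ω] {μ : Measure Ω} {T : Ω → Ω}

lemma exists_ae_eq_const_of_ae_le_comp [IsFiniteMeasure μ] {X : Type*} [Nonempty X]
    [LinearOrder X]
    [TopologicalSpace X] [OrderTopology X] [SecondCountableTopology X] [MeasurableSpace X]
    [OpensMeasurableSpace X] (hT : Ergodic T μ) {F : Ω → X} (hF : AEMeasurable F μ)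
    (hle : ∀ᵐ ω ∂μ, F ω ≤ F (T ω)) : ∃ c, F =ᵐ[μ] Function.const Ω c := by
  refine Filter.exists_eventuallyEq_const_of_forall_separating
    (· ∈ range (Ioi : X → Set X)) ?_
  rintro _ ⟨q, rfl⟩
  rcases hT.ae_empty_or_univ_of_ae_le_preimage (hF.nullMeasurable (measurableSet_Ioi (a := q)))
    (hle.mono fun ω hω (hq : q < F ω) => hq.trans_le hω) with hnull | hfull
  · exact .inr (measure_eq_zero_iff_ae_notMem.1 (ae_eq_empty.1 hnull))
  · exact .inl (eventuallyEq_univ.1 hfull)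

lemma ae_forall_iterate (hT : Measure.QuasiMeasurePreserving T μ μ) {p : Ω → Prop}
    (hp : ∀ᵐ ω ∂μ, p ω) : ∀ᵐ ω ∂μ, ∀ k, p (T^[k] ω) :=
  ae_all_iff.2 fun k => (hT.iterate k).ae hp

/-- Shrinking to the points whose whole two-sided orbit stays in a set makes the set invariant. -/
lemma exists_measurable_invariant_of_ae {θ : Equiv.Perm Ω} {p : Ω → Prop}
    (hθ : Measure.QuasiMeasurePreserving θ μ μ)
    (hθ_symm : Measure.QuasiMeasurePreserving θ.symm μ μ) (hp : ∀ᵐ ω ∂μ, p ω) :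
    ∃ A : Set Ω, MeasurableSet A ∧ (∀ ω, ω ∈ A ↔ θ ω ∈ A) ∧ (∀ᵐ ω ∂μ, ω ∈ A) ∧ ∀ ω ∈ A, p ω := by
  obtain ⟨G, hG_ae, hG, hGp⟩ := hp.exists_measurable_mem
  let A : Set Ω := {ω | ∀ k l, θ^[l] (θ.symm^[k] ω) ∈ G}
  have hA : MeasurableSet A := by
    simp only [A, ofPred_forall]
    exact .iInter fun k => .iInter fun l =>
      hG.preimage ((hθ.measurable.iterate l).comp (hθ_symm.measurable.iterate k))
  refine ⟨A, hA, fun ω => ⟨fun h k l => ?_, fun h k l => ?_⟩,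
    ae_forall_iterate hθ_symm (ae_forall_iterate hθ hG_ae), fun ω h => hGp ω (h 0 0)⟩
  · cases k with
    | zero => exact h 0 (l + 1)
    | succ k => simpa only [Function.iterate_succ_apply, θ.symm_apply_apply] using h k l
  · simpa only [Function.iterate_succ_apply, θ.symm_apply_apply] using h (k + 1) l

lemma exists_measureReal_forall_not_lt [IsFiniteMeasure μ] {p : ℕ → Ω → Prop}
    (hp : ∀ l, NullMeasurableSet {ω | p l ω} μ) (hex : ∀ᵐ ω ∂μ, ∃ l, p l ω) {a : ℝ} (ha : 0 < a) :
    ∃ K, μ.real {ω | ∀ l ≤ K, ¬p l ω} < a := by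
  have meas : ∀ K, NullMeasurableSet {ω | ∀ l ≤ K, ¬p l ω} μ := fun K => by
    simp only [ofPred_forall]
    exact .iInter fun l => .iInter fun _ => (hp l).compl
  have inter_null : μ (⋂ K, {ω | ∀ l ≤ K, ¬p l ω}) = 0 := by
    rw [measure_eq_zero_iff_ae_notMem]
    filter_upwards [hex] with ω ⟨l, hl⟩ hω using mem_iInter.1 hω l l le_rfl hl
  have lim := tendsto_measure_iInter_atTop meas
    (fun K K' hK ω hω l hl => hω l (hl.trans hK)) ⟨0, measure_ne_top μ _⟩
  rw [inter_null] at lim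
  obtain ⟨K, hK⟩ := (lim.eventually (gt_mem_nhds (ENNReal.ofReal_pos.2 ha))).exists
  exact ⟨K, (ENNReal.lt_ofReal_iff_toReal_lt (measure_ne_top _ _)).1 hK⟩

variable {f : ℕ → Ω → ℝ}

lemma ae_exists_le_of_ae_liminf_lt {q : ℝ}
    (h : ∀ᵐ ω ∂μ, liminf (fun n : ℕ => (((n : ℝ)⁻¹ * f n ω : ℝ) : EReal)) atTop < q) :
    ∀ᵐ ω ∂μ, ∃ l : ℕ, 1 ≤ l ∧ f l ω ≤ l * q := by
  filter_upwards [h] with ω hω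
  obtain ⟨l, hl, hl1⟩ := ((frequently_lt_of_liminf_lt (by isBoundedDefault) hω).and_eventually
    (eventually_ge_atTop 1)).exists
  rw [EReal.coe_lt_coe_iff, inv_mul_lt_iff₀ (by exact_mod_cast hl1)] at hl
  exact ⟨l, hl1, hl.le⟩

variable [IsProbabilityMeasure μ]

lemma ae_eventually_birkhoffSum_indicator_le (hT : Ergodic T μ) {B : Set Ω}
    (hB : NullMeasurableSet B μ) {a : ℝ} (ha : μ.real B < a) :
    ∀ᵐ ω ∂μ, ∀ᶠ n : ℕ in atTop, birkhoffSum T (B.indicator (1 : Ω → ℝ)) n ω ≤ n * a := by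
  have integral_lt : ∫ ω, B.indicator (1 : Ω → ℝ) ω ∂μ < a := by
    rwa [integral_indicator₀ hB, Pi.one_def, setIntegral_const, smul_eq_mul, mul_one]
  filter_upwards [ae_eventually_birkhoffAverage_lt hT
    ((integrable_const (1 : ℝ)).indicator₀ hB) integral_lt] with ω hω
  filter_upwards [hω, eventually_gt_atTop 0] with n hn hn0
  have hn0 : (0 : ℝ) < n := mod_cast hn0
  rw [birkhoffAverage, smul_eq_mul, inv_mul_lt_iff₀ hn0] at hn
  exact hn.le

lemma ae_eventually_le_of_ae_exists_le (hT : Ergodic T μ) (hf : ∀ n, AEMeasurable (f n) μ)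
    (hsub : ∀ᵐ ω ∂μ, SubadditiveAt T f ω) (h1 : ∀ᵐ ω ∂μ, f 1 ω ≤ 0) {q r : ℝ}
    (hq : ∀ᵐ ω ∂μ, ∃ l : ℕ, 1 ≤ l ∧ f l ω ≤ l * q) (hqr : q < r) :
    ∀ᵐ ω ∂μ, ∀ᶠ n : ℕ in atTop, f n ω ≤ n * r := by
  set A : Set Ω := {ω | ∀ k, SubadditiveAt T f (T^[k] ω) ∧ f 1 (T^[k] ω) ≤ 0}
  have hA : MapsTo T A A := fun ω hω k => hω (k + 1)
  have A_full : ∀ᵐ ω ∂μ, ω ∈ A := ae_forall_iterate hT.quasiMeasurePreserving (hsub.and h1)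
  have subA : ∀ ω ∈ A, SubadditiveAt T f ω := fun ω hω => (hω 0).1
  have nonposA : ∀ ω ∈ A, f 1 ω ≤ 0 := fun ω hω => (hω 0).2
  rcases lt_or_ge 0 q with hq0 | hq0
  · filter_upwards [A_full] with ω hω
    filter_upwards [eventually_ge_atTop 1] with n hn
    exact (nonpos_of_subadditiveAt hA subA nonposA hn hω).trans
      (mul_nonneg n.cast_nonneg (hq0.trans hqr).le)
  obtain ⟨a, ha, hqa⟩ : ∃ a, 0 < a ∧ (1 - q) * a = r - q :=
    ⟨(r - q) / (1 - q), div_pos (by linarith) (by linarith), mul_div_cancel₀ _ (by linarith)⟩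
  have good_meas : ∀ l : ℕ, NullMeasurableSet {ω | 1 ≤ l ∧ f l ω ≤ l * q} μ := fun l =>
    (NullMeasurableSet.const _).inter (nullMeasurableSet_le (hf l) aemeasurable_const)
  obtain ⟨K, hK⟩ := exists_measureReal_forall_not_lt good_meas hq ha
  set B : Set Ω := {ω | ∀ l ≤ K, ¬(1 ≤ l ∧ f l ω ≤ l * q)} with B_def
  have B_meas : NullMeasurableSet B μ := by
    simp only [B_def, ofPred_forall]
    exact .iInter fun l => .iInter fun _ => (good_meas l).compl
  have block : ∀ ω ∈ A, ω ∉ B → ∃ l, 1 ≤ l ∧ l ≤ K ∧ f l ω ≤ l * q := fun ω _ hω => by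
    simp only [B_def, mem_ofPred_eq, not_forall, not_not] at hω
    obtain ⟨l, hlK, hl, hfl⟩ := hω
    exact ⟨l, hl, hlK, hfl⟩
  filter_upwards [A_full, ae_eventually_birkhoffSum_indicator_le hT B_meas hK] with ω hω hsum
  filter_upwards [hsum, eventually_ge_atTop 1, (tendsto_natCast_atTop_atTop.const_mul_atTop
    ha).eventually_ge_atTop (-q * K)] with n hn hn1 hnK
  nlinarith [le_mul_sub_birkhoffSum_indicator hA subA nonposA hq0 block hn1 hω]

lemma exists_ae_tendsto_of_subadditive_of_nonpos (hT : Ergodic T μ)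
    (hf : ∀ n, Measurable (f n)) (hsub : ∀ᵐ ω ∂μ, SubadditiveAt T f ω)
    (h1 : ∀ᵐ ω ∂μ, f 1 ω ≤ 0) :
    ∃ c : EReal, ∀ᵐ ω ∂μ,
      Tendsto (fun n : ℕ => (((n : ℝ)⁻¹ * f n ω : ℝ) : EReal)) atTop (𝓝 c) := by
  obtain ⟨c, hc⟩ := exists_ae_eq_const_of_ae_le_comp hT
    (F := fun ω => liminf (fun n : ℕ => (((n : ℝ)⁻¹ * f n ω : ℝ) : EReal)) atTop)
    ((Measurable.liminf fun n => ((hf n).const_mul _).coe_real_ereal).aemeasurable) (by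
      filter_upwards [hsub, h1] with ω hω hω1
      exact liminf_average_le_comp fun n => by
        have := hω 1 n
        rw [add_comm 1 n, T.iterate_one] at this
        linarith)
  have upper : ∀ᵐ ω ∂μ, ∀ r : ℚ, c < (r : ℝ) → ∀ᶠ n : ℕ in atTop, f n ω ≤ n * r := by
    simp only [ae_all_iff]
    intro r hr
    obtain ⟨q, hcq, hqr⟩ := EReal.lt_iff_exists_real_btwn.1 hr
    refine ae_eventually_le_of_ae_exists_le hT (fun n => (hf n).aemeasurable) hsub h1 ?_
      (EReal.coe_lt_coe_iff.1 hqr)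
    exact ae_exists_le_of_ae_liminf_lt (hc.mono fun ω hω => hω.trans_lt hcq)
  refine ⟨c, ?_⟩
  filter_upwards [hc, upper] with ω hω hωu
  refine tendsto_of_le_liminf_of_limsup_le hω.ge (le_of_forall_gt_imp_ge_of_dense fun a ha => ?_)
  obtain ⟨r, hcr, hra⟩ := EReal.lt_iff_exists_rat_btwn.1 ha
  refine (limsup_le_of_le (by isBoundedDefault) ?_).trans hra.le
  filter_upwards [hωu r hcr, eventually_gt_atTop 0] with n hn hn0
  rw [EReal.coe_le_coe_iff, inv_mul_le_iff₀ (by exact_mod_cast hn0)]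
  exact hn

theorem exists_ae_tendsto_of_subadditive (hT : Ergodic T μ) (hf : ∀ n, Measurable (f n))
    (hsub : ∀ᵐ ω ∂μ, SubadditiveAt T f ω) (h1 : Integrable (fun ω => max (f 1 ω) 0) μ) :
    ∃ c : EReal, ∀ᵐ ω ∂μ,
      Tendsto (fun n : ℕ => (((n : ℝ)⁻¹ * f n ω : ℝ) : EReal)) atTop (𝓝 c) := by
  set g : Ω → ℝ := fun ω => max (f 1 ω) 0
  have sum_meas : ∀ n, Measurable (birkhoffSum T g n) := fun n =>
    Finset.measurable_fun_sum _ fun i _ =>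
      ((hf 1).max measurable_const).comp (hT.measurable.iterate i)
  obtain ⟨c, hc⟩ := exists_ae_tendsto_of_subadditive_of_nonpos hT
    (f := fun n ω => f n ω - birkhoffSum T g n ω) (fun n => (hf n).sub (sum_meas n))
    (hsub.mono fun ω hω m n => by linarith [hω m n, birkhoffSum_add T g m n ω])
    (.of_forall fun ω => by simp [g])
  refine ⟨c + ((∫ ω, g ω ∂μ : ℝ) : EReal), ?_⟩
  filter_upwards [hc, ae_tendsto_birkhoffAverage hT h1] with ω hdiff havg
  have add_cont : Tendsto (fun p : EReal × EReal => p.1 + p.2)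
      (𝓝 (c, ((∫ ω, g ω ∂μ : ℝ) : EReal))) (𝓝 (c + ((∫ ω, g ω ∂μ : ℝ) : EReal))) :=
    EReal.continuousAt_add (.inr (EReal.coe_ne_bot _)) (.inr (EReal.coe_ne_top _))
  refine (add_cont.comp (hdiff.prodMk_nhds
    ((continuous_coe_real_ereal.tendsto _).comp havg))).congr fun n => ?_
  simp only [Function.comp_apply, birkhoffAverage, smul_eq_mul, ← EReal.coe_add, ← mul_add,
    sub_add_cancel]

end Subadditive

/-! ### Birkhoff contraction of ratios -/

section Contraction

variable {ι : Type*}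

/-- The oscillation of a function on a finite set. -/
noncomputable def osc (x : ι → ℝ) : ℝ := (⨆ i, x i) - ⨅ i, x i

section Finite

variable [Finite ι]

lemma le_iSup_of_finite (x : ι → ℝ) (i : ι) : x i ≤ ⨆ i, x i :=
  le_ciSup (finite_range x).bddAbove i

lemma iInf_le_of_finite (x : ι → ℝ) (i : ι) : ⨅ i, x i ≤ x i :=
  ciInf_le (finite_range x).bddBelow i

lemma iInf_pos_of_finite [Nonempty ι] {x : ι → ℝ} (hx : ∀ i, 0 < x i) : 0 < ⨅ i, x i := by
  obtain ⟨i, hi⟩ := exists_eq_ciInf_of_finite (f := x)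
  exact hi ▸ hx i

lemma iInf_le_iSup_of_finite [Nonempty ι] (x : ι → ℝ) : ⨅ i, x i ≤ ⨆ i, x i :=
  (iInf_le_of_finite x (Classical.arbitrary ι)).trans (le_iSup_of_finite x _)

lemma osc_nonneg [Nonempty ι] (x : ι → ℝ) : 0 ≤ osc x :=
  sub_nonneg.2 (iInf_le_iSup_of_finite x)

lemma abs_sub_le_osc {x : ι → ℝ} {r : ℝ} (hr : r ∈ Icc (⨅ i, x i) (⨆ i, x i)) (i : ι) :
    |x i - r| ≤ osc x := by
  have h₁ := le_iSup_of_finite x i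
  have h₂ := iInf_le_of_finite x i
  rw [osc, abs_le]
  constructor <;> linarith [hr.1, hr.2]

end Finite

variable [Fintype ι]

lemma sum_mul_le_of_mul_le_weight {κ c : ℝ} {α β x : ι → ℝ} (hαβ : ∀ k, κ * α k ≤ β k)
    (hα : ∑ k, α k = 1) (hβ : ∑ k, β k = 1) (hx : ∀ k, x k ≤ c) :
    ∑ k, β k * x k ≤ κ * ∑ k, α k * x k + (1 - κ) * c := by
  have hnonneg : 0 ≤ ∑ k, (β k - κ * α k) * (c - x k) :=
    Finset.sum_nonneg fun k _ => mul_nonneg (sub_nonneg.2 (hαβ k)) (sub_nonneg.2 (hx k))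
  have hexpand : ∑ k, (β k - κ * α k) * (c - x k) =
      (∑ k, β k - κ * ∑ k, α k) * c - ∑ k, β k * x k + κ * ∑ k, α k * x k := by
    simp only [Finset.mul_sum, sub_mul, Finset.sum_mul, ← Finset.sum_sub_distrib,
      ← Finset.sum_add_distrib]
    exact Finset.sum_congr rfl fun k _ => by ring
  rw [hexpand, hα, hβ] at hnonneg
  linarith

lemma vecMul_div_vecMul {p s : ι → ℝ} (hs : ∀ k, s k ≠ 0) (Q : Matrix ι ι ℝ) (j : ι) :
    (p ᵥ* Q) j / (s ᵥ* Q) j = ∑ k, s k * Q k j / (s ᵥ* Q) j * (p k / s k) := by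
  simp only [vecMul, dotProduct, Finset.sum_div]
  exact Finset.sum_congr rfl fun k _ => by field_simp [hs k]

variable [Nonempty ι] {κ : ℝ} {p s : ι → ℝ} {Q : Matrix ι ι ℝ}

/-- The ratio `(pQ)ⱼ / (sQ)ⱼ` is an average of the `pₖ / sₖ` whose weights dominate `κ` times the
weights `sₖ / ∑ s`, which do not depend on `j`. -/
lemma exists_vecMul_div_vecMul_mem_Icc (hs : ∀ k, 0 < s k) (hsQ : ∀ j, 0 < (s ᵥ* Q) j)
    (hQ : ∀ k l j, κ * Q l j ≤ Q k j) :
    ∃ a, ∀ j, (p ᵥ* Q) j / (s ᵥ* Q) j ∈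
      Icc (κ * a + (1 - κ) * ⨅ k, p k / s k) (κ * a + (1 - κ) * ⨆ k, p k / s k) := by
  have hsum : 0 < ∑ k, s k := Finset.sum_pos (fun k _ => hs k) Finset.univ_nonempty
  have hα : ∑ k, s k / ∑ l, s l = 1 := by rw [← Finset.sum_div, div_self hsum.ne']
  have hβ : ∀ j, ∑ k, s k * Q k j / (s ᵥ* Q) j = 1 := fun j => by
    rw [← Finset.sum_div]
    exact div_self (hsQ j).ne'
  have hαβ : ∀ j k, κ * (s k / ∑ l, s l) ≤ s k * Q k j / (s ᵥ* Q) j := fun j k => by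
    have hcol : κ * (s ᵥ* Q) j ≤ Q k j * ∑ l, s l := by
      simp only [vecMul, dotProduct, Finset.mul_sum]
      exact Finset.sum_le_sum fun l _ => by nlinarith [hQ k l j, hs l]
    rw [← mul_div_assoc, div_le_div_iff₀ hsum (hsQ j)]
    nlinarith [hs k]
  refine ⟨∑ k, s k / (∑ l, s l) * (p k / s k), fun j => ?_⟩
  rw [vecMul_div_vecMul (fun k => (hs k).ne')]
  constructor
  · have := sum_mul_le_of_mul_le_weight (hαβ j) hα (hβ j)
      fun k => neg_le_neg (iInf_le_of_finite (fun k => p k / s k) k)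
    simp only [mul_neg, Finset.sum_neg_distrib] at this
    linarith
  · exact sum_mul_le_of_mul_le_weight (hαβ j) hα (hβ j)
      (le_iSup_of_finite fun k => p k / s k)

lemma osc_vecMul_div_vecMul_le (hs : ∀ k, 0 < s k) (hsQ : ∀ j, 0 < (s ᵥ* Q) j)
    (hQ : ∀ k l j, κ * Q l j ≤ Q k j) :
    osc (fun j => (p ᵥ* Q) j / (s ᵥ* Q) j) ≤ (1 - κ) * osc fun k => p k / s k := by
  obtain ⟨a, ha⟩ := exists_vecMul_div_vecMul_mem_Icc (p := p) hs hsQ hQ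
  have hsup := ciSup_le fun j => (ha j).2
  have hinf := le_ciInf fun j => (ha j).1
  simp only [osc]
  linarith

lemma vecMul_div_vecMul_mem_Icc (hs : ∀ k, 0 < s k) (hsQ : ∀ j, 0 < (s ᵥ* Q) j)
    (hQ : ∀ k j, 0 ≤ Q k j) (j : ι) :
    (p ᵥ* Q) j / (s ᵥ* Q) j ∈ Icc (⨅ k, p k / s k) (⨆ k, p k / s k) := by
  obtain ⟨a, ha⟩ := exists_vecMul_div_vecMul_mem_Icc (κ := 0) (p := p) hs hsQ
    fun k _ j => by simpa using hQ k j
  simpa using ha j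

end Contraction

section Decay

lemma isBigO_exp_nat_add_iff {f : ℕ → ℝ} (δ : ℝ) (d : ℕ) :
    (fun n => f (n + d)) =O[atTop] (fun n : ℕ => Real.exp (-δ * n)) ↔
      f =O[atTop] fun n : ℕ => Real.exp (-δ * n) := by
  have hshift : (fun n : ℕ => Real.exp (-δ * n)) =
      fun n : ℕ => Real.exp (δ * d) * Real.exp (-δ * (n + d : ℕ)) := by
    funext n
    rw [← Real.exp_add]
    push_cast
    ring_nf
  rw [hshift, Asymptotics.isBigO_const_mul_right_iff (Real.exp_ne_zero _), ← hshift]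
  conv_rhs => rw [← map_add_atTop_eq_nat d, Asymptotics.isBigO_map]
  rfl

variable {o κ : ℕ → ℝ} {d : ℕ}

/-- Only every `d`-th term is compared, so the quantity that decays along consecutive steps is the
product over a window of length `d`. -/
lemma prod_window_le_exp_neg_sum (ho : ∀ n, 0 ≤ o n) (hd : d ≠ 0)
    (hcontract : ∀ n, o (n + d) ≤ (1 - κ n) * o n) (n : ℕ) :
    ∏ i ∈ Finset.range d, o (n + i) ≤
      (∏ i ∈ Finset.range d, o i) * Real.exp (-∑ k ∈ Finset.range n, κ k) := by
  obtain ⟨d, rfl⟩ := Nat.exists_eq_succ_of_ne_zero hd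
  induction n with
  | zero => simp
  | succ n ih =>
    have hnonneg : 0 ≤ ∏ i ∈ Finset.range d, o (n + 1 + i) := Finset.prod_nonneg fun i _ => ho _
    have hexp : 1 - κ n ≤ Real.exp (-κ n) := by linarith [Real.add_one_le_exp (-κ n)]
    calc ∏ i ∈ Finset.range (d + 1), o (n + 1 + i)
        = (∏ i ∈ Finset.range d, o (n + 1 + i)) * o (n + (d + 1)) := by
          rw [Finset.prod_range_succ, add_right_comm n 1 d, add_assoc]
      _ ≤ (∏ i ∈ Finset.range d, o (n + 1 + i)) * (Real.exp (-κ n) * o n) :=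
          mul_le_mul_of_nonneg_left
            ((hcontract n).trans (mul_le_mul_of_nonneg_right hexp (ho n))) hnonneg
      _ = (∏ i ∈ Finset.range (d + 1), o (n + i)) * Real.exp (-κ n) := by
          rw [Finset.prod_range_succ']
          simp only [add_zero, add_assoc, add_comm 1]
          ring
      _ ≤ _ := mul_le_mul_of_nonneg_right ih (Real.exp_pos _).le
      _ = _ := by rw [Finset.sum_range_succ, neg_add, Real.exp_add, mul_assoc]

lemma isBigO_exp_of_le_one_sub_mul (ho : ∀ n, 0 ≤ o n) (hanti : Antitone o) (hd : d ≠ 0)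
    (hcontract : ∀ n, o (n + d) ≤ (1 - κ n) * o n) {a δ : ℝ}
    (hκ : Tendsto (fun n : ℕ => (n : ℝ)⁻¹ * ∑ k ∈ Finset.range n, κ k) atTop (𝓝 a))
    (hδ : d * δ < a) : o =O[atTop] fun n : ℕ => Real.exp (-δ * n) := by
  rw [← isBigO_exp_nat_add_iff δ d]
  refine Asymptotics.IsBigO.of_pow hd (Asymptotics.IsBigO.of_bound (∏ i ∈ Finset.range d, o i) ?_)
  filter_upwards [hκ.eventually_const_lt hδ, eventually_gt_atTop 0] with n hn hn0
  rw [lt_inv_mul_iff₀ (by exact_mod_cast hn0)] at hn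
  simp only [Pi.pow_apply, Real.norm_eq_abs]
  rw [abs_of_nonneg (pow_nonneg (ho _) _), abs_of_pos (by positivity), ← Real.exp_nat_mul]
  calc o (n + d) ^ d = ∏ _i ∈ Finset.range d, o (n + d) := by simp
    _ ≤ ∏ i ∈ Finset.range d, o (n + i) := Finset.prod_le_prod (fun i _ => ho _) fun i hi =>
        hanti (Nat.add_le_add_left (Finset.mem_range.1 hi).le n)
    _ ≤ _ := prod_window_le_exp_neg_sum ho hd hcontract n
    _ ≤ _ := by
        refine mul_le_mul_of_nonneg_left (Real.exp_le_exp.2 ?_)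
          (Finset.prod_nonneg fun i _ => ho _)
        linarith

end Decay

/-! ### Limiting directions of products of positive matrices -/

section ColumnDirections

variable {ι : Type*} [Fintype ι]

/-- Exponential convergence, at rate `δ`, of the directions of all columns of `P n` to the
direction of `v`; directions are compared after scaling to entries of sum one. -/
def ColumnsConverge (P : ℕ → Matrix ι ι ℝ) (v : ι → ℝ) (δ : ℝ) : Prop :=
  ∀ i j, (fun n => P n i j / ∑ k, P n k j - v i / ∑ k, v k) =O[atTop]
    fun n : ℕ => Real.exp (-δ * n)

lemma tendsto_exp_neg_mul_nat {δ : ℝ} (hδ : 0 < δ) :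
    Tendsto (fun n : ℕ => Real.exp (-δ * n)) atTop (𝓝 0) :=
  Real.tendsto_exp_atBot.comp
    (tendsto_natCast_atTop_atTop.const_mul_atTop_of_neg (neg_lt_zero.2 hδ))

lemma ColumnsConverge.tendsto {P : ℕ → Matrix ι ι ℝ} {v : ι → ℝ} {δ : ℝ}
    (h : ColumnsConverge P v δ) (hδ : 0 < δ) (i j : ι) :
    Tendsto (fun n => P n i j / ∑ k, P n k j) atTop (𝓝 (v i / ∑ k, v k)) :=
  tendsto_sub_nhds_zero_iff.1 ((h i j).trans_tendsto (tendsto_exp_neg_mul_nat hδ))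

lemma ColumnsConverge.smul {P : ℕ → Matrix ι ι ℝ} {v : ι → ℝ} {δ c : ℝ}
    (h : ColumnsConverge P v δ) (hc : c ≠ 0) : ColumnsConverge P (c • v) δ := by
  simpa only [ColumnsConverge, Pi.smul_apply, smul_eq_mul, ← Finset.mul_sum,
    mul_div_mul_left _ _ hc] using h

variable [Nonempty ι]

lemma exists_ratio_limit {p s : ℕ → ι → ℝ} {C Q : ℕ → Matrix ι ι ℝ} {κ : ℕ → ℝ} {d : ℕ}
    {a δ : ℝ} (hs : ∀ n j, 0 < s n j) (hC : ∀ n i j, 0 ≤ C n i j)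
    (hpC : ∀ n, p (n + 1) = p n ᵥ* C n) (hsC : ∀ n, s (n + 1) = s n ᵥ* C n)
    (hpQ : ∀ n, p (n + d) = p n ᵥ* Q n) (hsQ : ∀ n, s (n + d) = s n ᵥ* Q n) (hd : d ≠ 0)
    (hQ : ∀ n k l j, κ n * Q n l j ≤ Q n k j)
    (hκ : Tendsto (fun n : ℕ => (n : ℝ)⁻¹ * ∑ k ∈ Finset.range n, κ k) atTop (𝓝 a))
    (hδ : d * δ < a) :
    ∃ r ≥ ⨅ j, p 0 j / s 0 j, ∀ j, (fun n => p n j / s n j - r) =O[atTop]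
      fun n : ℕ => Real.exp (-δ * n) := by
  have hmem : ∀ n j, p (n + 1) j / s (n + 1) j ∈
      Icc (⨅ j, p n j / s n j) (⨆ j, p n j / s n j) := fun n j => by
    have hs' := hs (n + 1)
    rw [hsC] at hs' ⊢
    rw [hpC]
    exact vecMul_div_vecMul_mem_Icc (hs n) hs' (hC n) j
  have hsup : Antitone fun n => ⨆ j, p n j / s n j :=
    antitone_nat_of_succ_le fun n => ciSup_le fun j => (hmem n j).2
  have hinf : Monotone fun n => ⨅ j, p n j / s n j :=
    monotone_nat_of_le_succ fun n => le_ciInf fun j => (hmem n j).1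
  have hosc : (fun n => osc fun j => p n j / s n j) =O[atTop]
      fun n : ℕ => Real.exp (-δ * n) := by
    refine isBigO_exp_of_le_one_sub_mul (fun n => osc_nonneg _)
      (fun m n hmn => sub_le_sub (hsup hmn) (hinf hmn)) hd (fun n => ?_) hκ hδ
    have hs' := hs (n + d)
    rw [hsQ] at hs' ⊢
    rw [hpQ]
    exact osc_vecMul_div_vecMul_le (hs n) hs' (hQ n)
  have hnested := mem_iInter.1
    (hinf.ciSup_mem_iInter_Icc_of_antitone hsup fun n => iInf_le_iSup_of_finite _)
  exact ⟨_, (hnested 0).1, fun j => .trans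
    (.of_bound' (.of_forall fun n => (abs_sub_le_osc (hnested n) j).trans (le_abs_self _))) hosc⟩

lemma exists_columnsConverge {P C Q : ℕ → Matrix ι ι ℝ} {κ : ℕ → ℝ} {d : ℕ} {a δ : ℝ}
    (hP : ∀ n i j, 0 < P n i j) (hC : ∀ n i j, 0 ≤ C n i j)
    (hPC : ∀ n, P (n + 1) = P n * C n) (hPQ : ∀ n, P (n + d) = P n * Q n) (hd : d ≠ 0)
    (hQ : ∀ n k l j, κ n * Q n l j ≤ Q n k j)
    (hκ : Tendsto (fun n : ℕ => (n : ℝ)⁻¹ * ∑ k ∈ Finset.range n, κ k) atTop (𝓝 a))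
    (hδ₀ : 0 < δ) (hδ : d * δ < a) :
    ∃ v : ι → ℝ, (∀ i, 0 < v i) ∧ ∑ i, v i = 1 ∧ ColumnsConverge P v δ := by
  have hsum : ∀ n j, 0 < (1 ᵥ* P n) j := fun n j => by
    simpa [vecMul, dotProduct] using
      Finset.sum_pos (fun i _ => hP n i j) Finset.univ_nonempty
  choose v hv hconv using fun i => exists_ratio_limit (p := fun n => P n i)
    (s := fun n => 1 ᵥ* P n) hsum hC (fun n => by rw [hPC]; rfl)
    (fun n => by rw [hPC, vecMul_vecMul]) (fun n => by rw [hPQ]; rfl)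
    (fun n => by rw [hPQ, vecMul_vecMul]) hd hQ hκ hδ
  have hlim : ∀ i j, Tendsto (fun n => P n i j / (1 ᵥ* P n) j) atTop (𝓝 (v i)) := fun i j =>
    tendsto_sub_nhds_zero_iff.1 ((hconv i j).trans_tendsto (tendsto_exp_neg_mul_nat hδ₀))
  have hone : ∑ i, v i = 1 := by
    let j := Classical.arbitrary ι
    refine tendsto_nhds_unique (tendsto_finsetSum _ fun i _ => hlim i j)
      (tendsto_const_nhds.congr fun n => ?_)
    rw [← Finset.sum_div, eq_comm, div_eq_one_iff_eq (hsum n j).ne']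
    simp [vecMul, dotProduct]
  refine ⟨v, fun i => (iInf_pos_of_finite fun j => div_pos (hP 0 i j) (hsum 0 j)).trans_le
    (hv i), hone, fun i j => ?_⟩
  simpa [hone, vecMul, dotProduct] using hconv i j

end ColumnDirections

section ContractionCoeff

variable {ι : Type*} [Finite ι]

/-- The largest `κ` with `κ * Q l j ≤ Q k j` for all `k`, `l`, `j`, for a positive matrix `Q`. -/
noncomputable def contractionCoeff (Q : Matrix ι ι ℝ) : ℝ :=
  ⨅ t : ι × ι × ι, Q t.1 t.2.2 / Q t.2.1 t.2.2

lemma contractionCoeff_mul_le {Q : Matrix ι ι ℝ} (hQ : ∀ i j, 0 < Q i j) (k l j : ι) :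
    contractionCoeff Q * Q l j ≤ Q k j :=
  (le_div_iff₀ (hQ l j)).1
    (iInf_le_of_finite (fun t : ι × ι × ι => Q t.1 t.2.2 / Q t.2.1 t.2.2) (k, l, j))

variable [Nonempty ι]

lemma contractionCoeff_pos {Q : Matrix ι ι ℝ} (hQ : ∀ i j, 0 < Q i j) :
    0 < contractionCoeff Q :=
  iInf_pos_of_finite fun _ => div_pos (hQ _ _) (hQ _ _)

lemma contractionCoeff_le_one {Q : Matrix ι ι ℝ} (hQ : ∀ i j, 0 < Q i j) :
    contractionCoeff Q ≤ 1 := by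
  let i := Classical.arbitrary ι
  exact le_of_mul_le_mul_right
    ((contractionCoeff_mul_le hQ i i i).trans_eq (one_mul _).symm) (hQ i i)

end ContractionCoeff

section OrbitProducts

variable {Ω ι : Type*} [Fintype ι] [DecidableEq ι]

/-- The product `B ω * B (τ ω) * ⋯ * B (τ^[n-1] ω)` along an orbit of `τ`. -/
noncomputable def orbitProd (τ : Ω → Ω) (B : Ω → Matrix ι ι ℝ) : ℕ → Ω → Matrix ι ι ℝ
  | 0, _ => 1
  | n + 1, ω => B ω * orbitProd τ B n (τ ω)

variable {τ : Ω → Ω} {B : Ω → Matrix ι ι ℝ}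

lemma orbitProd_add (m n : ℕ) (ω : Ω) :
    orbitProd τ B (m + n) ω = orbitProd τ B m ω * orbitProd τ B n (τ^[m] ω) := by
  induction m generalizing ω with
  | zero => simp [orbitProd]
  | succ m ih =>
    rw [Nat.add_right_comm, orbitProd, ih, orbitProd, Matrix.mul_assoc, Function.iterate_succ_apply]

lemma orbitProd_add_one (n : ℕ) (ω : Ω) :
    orbitProd τ B (n + 1) ω = orbitProd τ B n ω * B (τ^[n] ω) := by
  rw [orbitProd_add]
  simp [orbitProd]

lemma measurable_orbitProd_apply [MeasurableSpace Ω] (hτ : Measurable τ)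
    (hB : ∀ i j, Measurable fun ω => B ω i j) (n : ℕ) (i j : ι) :
    Measurable fun ω => orbitProd τ B n ω i j := by
  induction n generalizing i j with
  | zero => exact measurable_const
  | succ n ih =>
    simp only [orbitProd, Matrix.mul_apply]
    exact Finset.measurable_fun_sum _ fun k _ => (hB i k).mul ((ih k j).comp hτ)

/-- Non-negative matrices along the orbits of `τ` all of whose products of some fixed length
`d ≠ 0` have positive entries. -/
structure IsPrimitiveAlong (τ : Ω → Ω) (B : Ω → Matrix ι ι ℝ) (d : ℕ) : Prop where
  ne_zero : d ≠ 0
  nonneg : ∀ ω i j, 0 ≤ B ω i j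
  orbitProd_pos : ∀ ω i j, 0 < orbitProd τ B d ω i j

namespace IsPrimitiveAlong

variable {d : ℕ} (h : IsPrimitiveAlong τ B d)

include h

lemma exists_pos [Nonempty ι] (ω : Ω) (i : ι) : ∃ j, 0 < B ω i j := by
  by_contra! hle
  have hpos := h.orbitProd_pos ω i (Classical.arbitrary ι)
  obtain ⟨d, rfl⟩ := Nat.exists_eq_succ_of_ne_zero h.ne_zero
  simp [orbitProd, Matrix.mul_apply, fun j => (hle j).antisymm (h.nonneg ω i j)] at hpos

lemma mulVec_pos [Nonempty ι] {v : ι → ℝ} (hv : ∀ i, 0 < v i) (ω : Ω) (i : ι) :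
    0 < (B ω *ᵥ v) i := by
  obtain ⟨j, hj⟩ := h.exists_pos ω i
  exact Finset.sum_pos' (fun k _ => mul_nonneg (h.nonneg ω i k) (hv k).le)
    ⟨j, Finset.mem_univ j, mul_pos hj (hv j)⟩

lemma orbitProd_add_pos [Nonempty ι] (n : ℕ) (ω : Ω) (i j : ι) :
    0 < orbitProd τ B (n + d) ω i j := by
  induction n generalizing ω i with
  | zero => simpa using h.orbitProd_pos ω i j
  | succ n ih =>
    rw [Nat.add_right_comm, orbitProd]
    exact h.mulVec_pos (fun k => ih (τ ω) k) ω i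

end IsPrimitiveAlong

variable [Nonempty ι] [MeasurableSpace Ω] {μ : Measure Ω} [IsProbabilityMeasure μ] {d : ℕ}

lemma integrable_contractionCoeff_orbitProd (hτ : Measurable τ)
    (hB : ∀ i j, Measurable fun ω => B ω i j) (h : IsPrimitiveAlong τ B d) :
    Integrable (fun ω => contractionCoeff (orbitProd τ B d ω)) μ := by
  refine (integrable_const (1 : ℝ)).mono' (Measurable.aestronglyMeasurable ?_)
    (.of_forall fun ω => ?_)
  · exact Measurable.iInf fun t => (measurable_orbitProd_apply hτ hB d _ _).div
      (measurable_orbitProd_apply hτ hB d _ _)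
  · rw [Real.norm_of_nonneg (contractionCoeff_pos (h.orbitProd_pos ω)).le]
    exact contractionCoeff_le_one (h.orbitProd_pos ω)

theorem exists_ae_columnsConverge_orbitProd (hτ : Ergodic τ μ)
    (hB : ∀ i j, Measurable fun ω => B ω i j) (h : IsPrimitiveAlong τ B d) :
    ∃ δ > 0, ∀ᵐ ω ∂μ, ∃ v : ι → ℝ, ((∀ i, 0 < v i) ∧ ∑ i, v i = 1) ∧
      ColumnsConverge (orbitProd τ B · ω) v δ := by
  set g : Ω → ℝ := fun ω => contractionCoeff (orbitProd τ B d ω)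
  have hg : Integrable g μ := integrable_contractionCoeff_orbitProd hτ.measurable hB h
  have hg_pos : ∀ ω, 0 < g ω := fun ω => contractionCoeff_pos (h.orbitProd_pos ω)
  have hint : 0 < ∫ ω, g ω ∂μ := by
    rw [integral_pos_iff_support_of_nonneg (fun ω => (hg_pos ω).le) hg,
      Function.support_eq_univ fun ω => (hg_pos ω).ne']
    simp
  have hd : 0 < (d : ℝ) := Nat.cast_pos.2 (Nat.pos_of_ne_zero h.ne_zero)
  obtain ⟨δ, hδ₀, hδ⟩ : ∃ δ > 0, d * δ < ∫ ω, g ω ∂μ :=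
    ⟨(∫ ω, g ω ∂μ) / (d + 1), by positivity, by
      rw [mul_div_assoc', div_lt_iff₀ (by positivity)]
      linarith⟩
  refine ⟨δ, hδ₀, ?_⟩
  filter_upwards [ae_forall_iterate hτ.quasiMeasurePreserving (ae_tendsto_birkhoffAverage hτ hg)]
    with ω hω
  obtain ⟨v, hv, hone, hconv⟩ := exists_columnsConverge (d := d)
    (P := fun n => orbitProd τ B (n + d) ω) (C := fun n => B (τ^[n + d] ω))
    (Q := fun n => orbitProd τ B d (τ^[n + d] ω)) (κ := fun n => g (τ^[n + d] ω))
    (fun n => h.orbitProd_add_pos n ω) (fun n => h.nonneg _)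
    (fun n => by rw [Nat.add_right_comm, orbitProd_add_one])
    (fun n => orbitProd_add (n + d) d ω) h.ne_zero
    (fun n => contractionCoeff_mul_le (h.orbitProd_pos _))
    (by simpa only [birkhoffAverage, birkhoffSum, smul_eq_mul,
      Function.iterate_add_apply] using hω d)
    hδ₀ hδ
  exact ⟨v, ⟨hv, hone⟩, fun i j => (isBigO_exp_nat_add_iff _ d).1 (hconv i j)⟩

end OrbitProducts

section Rays

variable {ι : Type*} [Fintype ι] {M M' : Matrix ι ι ℝ} {u v w : ι → ℝ}

/-- `M` maps the ray spanned by `u` onto the ray spanned by `v`. -/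
def MapsRay (M : Matrix ι ι ℝ) (u v : ι → ℝ) : Prop :=
  ∃ c : ℝ, 0 < c ∧ M *ᵥ u = c • v

namespace MapsRay

lemma one [DecidableEq ι] (u : ι → ℝ) : MapsRay 1 u u :=
  ⟨1, one_pos, by rw [one_mulVec, one_smul]⟩

lemma mul (h' : MapsRay M' v w) (h : MapsRay M u v) : MapsRay (M' * M) u w := by
  obtain ⟨c, hc, hcu⟩ := h
  obtain ⟨c', hc', hcv⟩ := h'
  exact ⟨c * c', mul_pos hc hc', by rw [← mulVec_mulVec, hcu, mulVec_smul, hcv, smul_smul]⟩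

lemma smul_smul (h : MapsRay M u v) {a b : ℝ} (ha : 0 < a) (hb : 0 < b) :
    MapsRay M (a • u) (b • v) := by
  obtain ⟨c, hc, hcu⟩ := h
  refine ⟨a * c / b, by positivity, ?_⟩
  rw [mulVec_smul, hcu, _root_.smul_smul, _root_.smul_smul, div_mul_cancel₀ _ hb.ne']

lemma image_span (h : MapsRay M u v) :
    (M *ᵥ ·) '' (Submodule.span ℝ {u} : Submodule ℝ (ι → ℝ)) =
      (Submodule.span ℝ {v} : Submodule ℝ (ι → ℝ)) := by
  obtain ⟨c, hc, hcu⟩ := h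
  have hspan := LinearMap.map_span M.mulVecLin {u}
  rw [image_singleton, mulVecLin_apply, hcu,
    Submodule.span_singleton_smul_eq hc.ne'.isUnit] at hspan
  exact congrArg (fun p : Submodule ℝ (ι → ℝ) => (p : Set (ι → ℝ))) hspan

end MapsRay

end Rays

section EquivariantDirection

variable {ι : Type*} [Fintype ι]

lemma mulVec_eq_smul_of_columnsConverge [Nonempty ι] {P P' : ℕ → Matrix ι ι ℝ}
    {B : Matrix ι ι ℝ} {v v' : ι → ℝ} {δ δ' : ℝ} (hδ : 0 < δ) (hδ' : 0 < δ')
    (hP : ColumnsConverge P v δ) (hP' : ColumnsConverge P' v' δ')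
    (hPP' : ∀ n, P (n + 1) = B * P' n) (hv : ∑ i, v i = 1) (hv' : ∑ i, v' i = 1)
    (hBv' : ∑ i, (B *ᵥ v') i ≠ 0) : B *ᵥ v' = (∑ i, (B *ᵥ v') i) • v := by
  let j := Classical.arbitrary ι
  have hcol : ∀ i, Tendsto (fun n => P (n + 1) i j / ∑ k, P' n k j) atTop
      (𝓝 ((B *ᵥ v') i)) := fun i => by
    have hterm : ∀ k, Tendsto (fun n => B i k * (P' n k j / ∑ l, P' n l j)) atTop
        (𝓝 (B i k * v' k)) := fun k => by
      simpa [hv'] using (hP'.tendsto hδ' k j).const_mul (B i k)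
    refine (tendsto_finsetSum Finset.univ fun k _ => hterm k).congr fun n => ?_
    simp only [hPP', Matrix.mul_apply, Finset.sum_div, mul_div_assoc]
  have hsum := tendsto_finsetSum Finset.univ fun i _ => hcol i
  ext i
  have hratio : Tendsto (fun n => P (n + 1) i j / ∑ k, P (n + 1) k j) atTop (𝓝 (v i)) := by
    simpa [hv] using (tendsto_add_atTop_iff_nat 1).2 (hP.tendsto hδ i j)
  refine tendsto_nhds_unique (hcol i) ((hsum.mul hratio).congr' ?_)
  filter_upwards [hsum.eventually_ne hBv'] with n hn
  rw [← Finset.sum_div] at hn ⊢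
  rw [div_mul_div_comm, mul_comm (∑ k, P' n k j), mul_div_mul_left _ _ (div_ne_zero_iff.1 hn).1]

variable [DecidableEq ι] [Nonempty ι] {Ω : Type*} [MeasurableSpace Ω] {μ : Measure Ω}
  [IsProbabilityMeasure μ] {τ : Ω → Ω} {B : Ω → Matrix ι ι ℝ} {d : ℕ}

lemma exists_measurable_ae_columnsConverge_orbitProd (hτ : Ergodic τ μ)
    (hB : ∀ i j, Measurable fun ω => B ω i j) (h : IsPrimitiveAlong τ B d) :
    ∃ v : Ω → ι → ℝ, Measurable v ∧ (∀ ω, (∀ i, 0 < v ω i) ∧ ∑ i, v ω i = 1) ∧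
      ∃ δ > 0, ∀ᵐ ω ∂μ, ColumnsConverge (orbitProd τ B · ω) (v ω) δ := by
  obtain ⟨δ, hδ, hae⟩ := exists_ae_columnsConverge_orbitProd hτ hB h
  obtain ⟨u, hu⟩ := hae.choice
  have hu_meas : AEMeasurable u μ := by
    let j := Classical.arbitrary ι
    refine aemeasurable_pi_iff.2 fun i => aemeasurable_of_tendsto_metrizable_ae atTop
      (f := fun n ω => orbitProd τ B n ω i j / ∑ k, orbitProd τ B n ω k j) (fun n => ?_) ?_
    · have hmeas := measurable_orbitProd_apply hτ.measurable hB n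
      exact ((hmeas i j).div (Finset.measurable_fun_sum _ fun k _ => hmeas k j)).aemeasurable
    · filter_upwards [hu] with ω hω
      simpa [hω.1.2] using hω.2.tendsto hδ i j
  obtain ⟨v, hv_meas, hv_mem, huv⟩ := hu_meas.exists_ae_eq_range_subset
    (t := {v : ι → ℝ | (∀ i, 0 < v i) ∧ ∑ i, v i = 1}) (hu.mono fun ω hω => hω.1)
    ⟨fun _ => (Fintype.card ι : ℝ)⁻¹, fun _ => by positivity, by simp⟩
  refine ⟨v, hv_meas, fun ω => hv_mem (mem_range_self ω), δ, hδ, ?_⟩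
  filter_upwards [hu, huv] with ω hω huv
  exact huv ▸ hω.2

theorem exists_equivariant_direction (hτ : Ergodic τ μ)
    (hB : ∀ i j, Measurable fun ω => B ω i j) (h : IsPrimitiveAlong τ B d) :
    ∃ v : Ω → ι → ℝ, Measurable v ∧ (∀ ω i, 0 < v ω i) ∧
      (∀ᵐ ω ∂μ, MapsRay (B ω) (v (τ ω)) (v ω)) ∧
      ∃ δ > 0, ∀ᵐ ω ∂μ, ColumnsConverge (orbitProd τ B · ω) (v ω) δ := by
  obtain ⟨v, hv_meas, hv, δ, hδ, hconv⟩ :=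
    exists_measurable_ae_columnsConverge_orbitProd hτ hB h
  refine ⟨v, hv_meas, fun ω => (hv ω).1, ?_, δ, hδ, hconv⟩
  filter_upwards [hconv, hτ.quasiMeasurePreserving.ae hconv] with ω hω hτω
  have hc : 0 < ∑ i, (B ω *ᵥ v (τ ω)) i :=
    Finset.sum_pos (fun i _ => h.mulVec_pos (hv (τ ω)).1 ω i) Finset.univ_nonempty
  exact ⟨_, hc, mulVec_eq_smul_of_columnsConverge hδ hδ hω hτω (fun _ => rfl) (hv ω).2
    (hv (τ ω)).2 hc.ne'⟩

end EquivariantDirection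

/-! ### Euclidean norms of restrictions -/

section EuclideanNorm

variable {N : ℕ}

lemma enorm'_eq_norm (u : Fin N → ℝ) : enorm' u = ‖WithLp.toLp 2 u‖ := by
  simp [EuclideanSpace.norm_eq, enorm']

lemma enorm'_eq_sqrt_dotProduct (u : Fin N → ℝ) : enorm' u = √(u ⬝ᵥ u) := by
  simp only [enorm', dotProduct, sq]

lemma enorm'_zero : enorm' (0 : Fin N → ℝ) = 0 := by simp [enorm']

lemma enorm'_nonneg (u : Fin N → ℝ) : 0 ≤ enorm' u := Real.sqrt_nonneg _

lemma enorm'_pos {u : Fin N → ℝ} (hu : u ≠ 0) : 0 < enorm' u := by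
  rw [enorm'_eq_norm, norm_pos_iff]
  simpa using hu

lemma enorm'_smul (c : ℝ) (u : Fin N → ℝ) : enorm' (c • u) = |c| * enorm' u := by
  rw [enorm'_eq_norm, enorm'_eq_norm, WithLp.toLp_smul, norm_smul, Real.norm_eq_abs]

lemma enorm'_inv_smul_self {u : Fin N → ℝ} (hu : u ≠ 0) : enorm' ((enorm' u)⁻¹ • u) = 1 := by
  rw [enorm'_smul, abs_of_pos (inv_pos.2 (enorm'_pos hu)), inv_mul_cancel₀ (enorm'_pos hu).ne']

lemma enorm'_mono {u v : Fin N → ℝ} (h : ∀ i, |u i| ≤ v i) : enorm' u ≤ enorm' v :=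
  Real.sqrt_le_sqrt <| Finset.sum_le_sum fun i _ =>
    sq_le_sq.2 ((h i).trans (le_abs_self _))

lemma abs_apply_le_enorm' (u : Fin N → ℝ) (i : Fin N) : |u i| ≤ enorm' u := by
  simpa [enorm'_eq_norm] using PiLp.norm_apply_le (WithLp.toLp 2 u) i

lemma enorm'_le_sum_abs (u : Fin N → ℝ) : enorm' u ≤ ∑ i, |u i| := by
  rw [enorm', Real.sqrt_le_left (Finset.sum_nonneg fun i _ => abs_nonneg _)]
  simpa using Finset.sum_sq_le_sq_sum_of_nonneg (s := Finset.univ) fun i _ => abs_nonneg (u i)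

lemma sum_abs_le_enorm' (u : Fin N → ℝ) : ∑ i, |u i| ≤ N * enorm' u := by
  simpa using Finset.sum_le_card_nsmul Finset.univ _ _ fun i _ => abs_apply_le_enorm' u i

lemma measurable_enorm' : Measurable (enorm' : (Fin N → ℝ) → ℝ) := by
  unfold enorm'
  fun_prop

lemma enorm'_mulVec_le_mul_of_abs_le {M : Matrix (Fin N) (Fin N) ℝ} (hM : ∀ i j, 0 ≤ M i j)
    {C : ℝ} (hC : 0 ≤ C) {u w : Fin N → ℝ} (hu : ∀ i, |u i| ≤ C * w i) :
    enorm' (M *ᵥ u) ≤ C * enorm' (M *ᵥ w) := by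
  rw [← abs_of_nonneg hC, ← enorm'_smul, ← mulVec_smul]
  refine enorm'_mono fun i => ?_
  simp only [mulVec, dotProduct]
  refine (Finset.abs_sum_le_sum_abs _ _).trans (Finset.sum_le_sum fun j _ => ?_)
  rw [abs_mul, abs_of_nonneg (hM i j)]
  exact mul_le_mul_of_nonneg_left (hu j) (hM i j)

lemma enorm'_mulVec_le_of_abs_le {M : Matrix (Fin N) (Fin N) ℝ} {A : ℝ}
    (hA : ∀ i j, |M i j| ≤ A) (u : Fin N → ℝ) :
    enorm' (M *ᵥ u) ≤ N * (A * (N * enorm' u)) := by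
  have hentry : ∀ i, |(M *ᵥ u) i| ≤ A * (N * enorm' u) := fun i => by
    have hA₀ : 0 ≤ A := (abs_nonneg _).trans (hA i i)
    calc |(M *ᵥ u) i| ≤ ∑ j, |M i j * u j| := by
          simpa only [mulVec, dotProduct] using Finset.abs_sum_le_sum_abs (fun j => M i j * u j) _
      _ ≤ ∑ j, A * |u j| := Finset.sum_le_sum fun j _ => by
          rw [abs_mul]
          exact mul_le_mul_of_nonneg_right (hA i j) (abs_nonneg _)
      _ ≤ A * (N * enorm' u) := by
          rw [← Finset.mul_sum]
          exact mul_le_mul_of_nonneg_left (sum_abs_le_enorm' u) hA₀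
  refine (enorm'_le_sum_abs _).trans ?_
  simpa using Finset.sum_le_card_nsmul Finset.univ _ _ fun i _ => hentry i

end EuclideanNorm

section RestrNorm

open scoped Matrix.Norms.L2Operator

variable {N : ℕ} {M : Matrix (Fin N) (Fin N) ℝ} {F : Submodule ℝ (Fin N → ℝ)} {a : Fin N → ℝ}

lemma enorm'_mulVec_le_l2_opNorm (M : Matrix (Fin N) (Fin N) ℝ) (u : Fin N → ℝ) :
    enorm' (M *ᵥ u) ≤ ‖M‖ * enorm' u := by
  rw [enorm'_eq_norm, enorm'_eq_norm]
  exact M.l2_opNorm_mulVec (WithLp.toLp 2 u)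

lemma enorm'_mulVec_le_restrNorm {u : Fin N → ℝ} (hu : u ∈ F) :
    enorm' (M *ᵥ u) ≤ restrNorm M F * enorm' u := by
  rcases eq_or_ne u 0 with rfl | hne
  · simp [enorm'_zero]
  have hpos := enorm'_pos hne
  have hbdd : BddAbove {c : ℝ | ∃ u ∈ F, enorm' u ≤ 1 ∧ c = enorm' (M *ᵥ u)} := by
    refine ⟨‖M‖, ?_⟩
    rintro _ ⟨v, -, hv, rfl⟩
    exact (enorm'_mulVec_le_l2_opNorm M v).trans (mul_le_of_le_one_right (norm_nonneg _) hv)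
  have hunit : enorm' (M *ᵥ ((enorm' u)⁻¹ • u)) ≤ restrNorm M F :=
    le_csSup hbdd ⟨_, F.smul_mem _ hu, (enorm'_inv_smul_self hne).le, rfl⟩
  rwa [Matrix.mulVec_smul, enorm'_smul, abs_of_pos (inv_pos.2 hpos), inv_mul_le_iff₀' hpos]
    at hunit

lemma restrNorm_le {C : ℝ} (hC : 0 ≤ C) (h : ∀ u ∈ F, enorm' (M *ᵥ u) ≤ C * enorm' u) :
    restrNorm M F ≤ C := by
  refine csSup_le ⟨_, 0, F.zero_mem, by simp [enorm'_zero], rfl⟩ ?_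
  rintro _ ⟨u, hu, hu_le, rfl⟩
  exact (h u hu).trans (mul_le_of_le_one_right hC hu_le)

lemma restrNorm_nonneg (M : Matrix (Fin N) (Fin N) ℝ) (F : Set (Fin N → ℝ)) :
    0 ≤ restrNorm M F :=
  Real.sSup_nonneg <| by
    rintro _ ⟨u, -, -, rfl⟩
    exact enorm'_nonneg _

lemma restrNorm_pos (hM : IsUnit M) (hF : F ≠ ⊥) : 0 < restrNorm M F := by
  obtain ⟨u, hu, hne⟩ := F.exists_mem_ne_zero_of_ne_bot hF
  have hMu : M *ᵥ u ≠ 0 := fun h =>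
    hne (Matrix.mulVec_injective_iff_isUnit.2 hM (h.trans (M.mulVec_zero).symm))
  exact pos_of_mul_pos_left ((enorm'_pos hMu).trans_le (enorm'_mulVec_le_restrNorm hu))
    (enorm'_nonneg u)

lemma restrNorm_mul_le {M' : Matrix (Fin N) (Fin N) ℝ} {F' : Submodule ℝ (Fin N → ℝ)}
    (hF : ∀ u ∈ F, M *ᵥ u ∈ F') : restrNorm (M' * M) F ≤ restrNorm M' F' * restrNorm M F := by
  refine restrNorm_le (mul_nonneg (restrNorm_nonneg _ _) (restrNorm_nonneg _ _)) fun u hu => ?_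
  rw [← Matrix.mulVec_mulVec, mul_assoc]
  exact (enorm'_mulVec_le_restrNorm (hF u hu)).trans
    (mul_le_mul_of_nonneg_left (enorm'_mulVec_le_restrNorm hu) (restrNorm_nonneg _ _))

/-- The orthogonal complement of the line spanned by `a`. -/
noncomputable def hyperplane (a : Fin N → ℝ) : Submodule ℝ (Fin N → ℝ) :=
  (Fintype.linearCombination ℝ a).ker

lemma mem_hyperplane {u : Fin N → ℝ} : u ∈ hyperplane a ↔ u ⬝ᵥ a = 0 := Iff.rfl

lemma hyperplane_ne_bot (hN : 2 ≤ N) (a : Fin N → ℝ) : hyperplane a ≠ ⊥ := by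
  refine LinearMap.ker_ne_bot_of_finrank_lt ?_
  simpa using by omega

lemma dotProduct_self_of_enorm'_eq_one (ha : enorm' a = 1) : a ⬝ᵥ a = 1 := by
  simpa only [enorm'_eq_sqrt_dotProduct, Real.sqrt_eq_one] using ha

lemma enorm'_sub_smul_le (ha : enorm' a = 1) (u : Fin N → ℝ) :
    enorm' (u - (u ⬝ᵥ a) • a) ≤ enorm' u := by
  have hexpand : (u - (u ⬝ᵥ a) • a) ⬝ᵥ (u - (u ⬝ᵥ a) • a) = u ⬝ᵥ u - (u ⬝ᵥ a) ^ 2 := by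
    simp only [dotProduct_sub, sub_dotProduct, dotProduct_smul, smul_dotProduct, smul_eq_mul,
      dotProduct_self_of_enorm'_eq_one ha, dotProduct_comm a u]
    ring
  rw [enorm'_eq_sqrt_dotProduct, enorm'_eq_sqrt_dotProduct, hexpand]
  exact Real.sqrt_le_sqrt (sub_le_self _ (sq_nonneg _))

lemma sub_smul_mem_hyperplane (ha : enorm' a = 1) (u : Fin N → ℝ) :
    u - (u ⬝ᵥ a) • a ∈ hyperplane a := by
  rw [mem_hyperplane, sub_dotProduct, smul_dotProduct, dotProduct_self_of_enorm'_eq_one ha,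
    smul_eq_mul, mul_one, sub_self]

lemma one_sub_vecMulVec_mulVec (a u : Fin N → ℝ) :
    (1 - vecMulVec a a) *ᵥ u = u - (u ⬝ᵥ a) • a := by
  rw [Matrix.sub_mulVec, Matrix.one_mulVec, Matrix.vecMulVec_mulVec, dotProduct_comm,
    op_smul_eq_smul]

lemma restrNorm_hyperplane (ha : enorm' a = 1) (M : Matrix (Fin N) (Fin N) ℝ) :
    restrNorm M (hyperplane a) = ‖M * (1 - vecMulVec a a)‖ := by
  apply le_antisymm
  · refine restrNorm_le (norm_nonneg _) fun u hu => ?_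
    have hle := enorm'_mulVec_le_l2_opNorm (M * (1 - vecMulVec a a)) u
    rwa [← Matrix.mulVec_mulVec, one_sub_vecMulVec_mulVec, mem_hyperplane.1 hu, zero_smul,
      sub_zero] at hle
  · rw [Matrix.l2_opNorm_def]
    refine ContinuousLinearMap.opNorm_le_bound _ (restrNorm_nonneg _ _) fun x => ?_
    have hle := (enorm'_mulVec_le_restrNorm (M := M) (sub_smul_mem_hyperplane ha x.ofLp)).trans
      (mul_le_mul_of_nonneg_left (enorm'_sub_smul_le ha x.ofLp) (restrNorm_nonneg _ _))
    rw [← one_sub_vecMulVec_mulVec, Matrix.mulVec_mulVec, enorm'_eq_norm, enorm'_eq_norm] at hle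
    exact hle

lemma measurable_restrNorm_hyperplane {Ω : Type*} [MeasurableSpace Ω]
    {M : Ω → Matrix (Fin N) (Fin N) ℝ} {a : Ω → Fin N → ℝ}
    (hM : ∀ i j, Measurable fun ω => M ω i j) (ha : Measurable a)
    (hunit : ∀ ω, enorm' (a ω) = 1) :
    Measurable fun ω => restrNorm (M ω) (hyperplane (a ω)) := by
  have hnorm : Measurable fun X : Fin N → Fin N → ℝ => ‖Matrix.of X‖ := by
    refine Continuous.measurable ?_
    exact continuous_norm (E := Matrix (Fin N) (Fin N) ℝ)
  have hentry : ∀ i j, Measurable fun ω => (M ω * (1 - vecMulVec (a ω) (a ω))) i j := by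
    simp only [Matrix.mul_apply, Matrix.sub_apply, vecMulVec_apply]
    fun_prop
  simp only [restrNorm_hyperplane (hunit _)]
  exact hnorm.comp (measurable_pi_lambda _ fun i => measurable_pi_lambda _ (hentry i))

end RestrNorm

/-! ### Principal directions of a positive cocycle -/

section CocycleProducts

variable {Ω : Type*} {N : ℕ} {θ : Equiv.Perm Ω} {S : Ω → Matrix (Fin N) (Fin N) ℝ}

lemma Sprod_one (ω : Ω) : Sprod θ S 1 ω = S ω := by simp [Sprod]

lemma transpose_Sprod (n : ℕ) (ω : Ω) :
    (Sprod θ S n ω)ᵀ = orbitProd θ (fun ω => (S ω)ᵀ) n ω := by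
  induction n generalizing ω with
  | zero => simp [Sprod, orbitProd]
  | succ n ih => rw [Sprod, orbitProd, transpose_mul, ih]

lemma Sprod_add (m n : ℕ) (ω : Ω) :
    Sprod θ S (m + n) ω = Sprod θ S n (θ^[m] ω) * Sprod θ S m ω :=
  transpose_injective <| by simp only [transpose_mul, transpose_Sprod, orbitProd_add]

lemma Sprod_add_one (n : ℕ) (ω : Ω) :
    Sprod θ S (n + 1) ω = S (θ^[n] ω) * Sprod θ S n ω := by
  rw [Sprod_add, Sprod_one]

lemma orbitProd_symm (n : ℕ) (ω : Ω) :
    orbitProd θ.symm (fun ω => S (θ.symm ω)) n ω = Sprod θ S n (θ.symm^[n] ω) := by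
  induction n generalizing ω with
  | zero => rfl
  | succ n ih =>
    rw [orbitProd, ih, Sprod_add_one, Function.iterate_succ_apply,
      (Function.LeftInverse.iterate θ.apply_symm_apply n) _]

lemma Sprod_nonneg (hS : ∀ ω i j, 0 ≤ S ω i j) (n : ℕ) (ω : Ω) (i j : Fin N) :
    0 ≤ Sprod θ S n ω i j := by
  induction n generalizing ω i j with
  | zero => exact zero_le_one_elem i j
  | succ n ih =>
    rw [Sprod, Matrix.mul_apply]
    exact Finset.sum_nonneg fun k _ => mul_nonneg (ih _ i k) (hS ω k j)

lemma isUnit_Sprod (hS : ∀ ω, IsUnit (S ω)) (n : ℕ) (ω : Ω) : IsUnit (Sprod θ S n ω) := by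
  induction n generalizing ω with
  | zero => exact isUnit_one
  | succ n ih => exact (ih _).mul (hS ω)

lemma measurable_Sprod_apply [MeasurableSpace Ω] (hθ : Measurable θ)
    (hS : ∀ i j, Measurable fun ω => S ω i j) (n : ℕ) (i j : Fin N) :
    Measurable fun ω => Sprod θ S n ω i j := by
  simpa only [← transpose_Sprod, transpose_apply] using
    measurable_orbitProd_apply (B := fun ω => (S ω)ᵀ) hθ (fun i j => hS j i) n j i

variable {d : ℕ}

lemma isPrimitiveAlong_transpose (hd : d ≠ 0) (hS : ∀ ω i j, 0 ≤ S ω i j)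
    (hpos : ∀ ω i j, 0 < Sprod θ S d ω i j) : IsPrimitiveAlong θ (fun ω => (S ω)ᵀ) d where
  ne_zero := hd
  nonneg ω i j := hS ω j i
  orbitProd_pos ω i j := by
    rw [← transpose_Sprod]
    exact hpos ω j i

lemma isPrimitiveAlong_symm (hd : d ≠ 0) (hS : ∀ ω i j, 0 ≤ S ω i j)
    (hpos : ∀ ω i j, 0 < Sprod θ S d ω i j) :
    IsPrimitiveAlong θ.symm (fun ω => S (θ.symm ω)) d where
  ne_zero := hd
  nonneg ω := hS (θ.symm ω)
  orbitProd_pos ω i j := by simpa only [orbitProd_symm] using hpos _ i j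

end CocycleProducts

section PrincipalPair

variable {Ω : Type*} {N : ℕ} [MeasurableSpace Ω]

/-- A measurable choice of positive vectors of Euclidean length one. -/
structure IsPositiveUnitField (w : Ω → Fin N → ℝ) : Prop where
  measurable : Measurable w
  pos : ∀ ω i, 0 < w ω i
  enorm'_eq_one : ∀ ω, enorm' (w ω) = 1

/-- `w` spans the principal line at `ω` and `ws` the normal line of the complementary hyperplane:
both lines are carried along by one step of the cocycle generated by `S`. -/
structure IsPrincipalAt (θ : Equiv.Perm Ω) (S : Ω → Matrix (Fin N) (Fin N) ℝ)
    (w ws : Ω → Fin N → ℝ) (ω : Ω) : Prop where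
  mapsRay : MapsRay (S ω) (w ω) (w (θ ω))
  mapsRay_transpose : MapsRay (S ω)ᵀ (ws (θ ω)) (ws ω)

variable {μ : Measure Ω} [IsProbabilityMeasure μ]

lemma exists_equivariant_unitField [NeZero N] {τ : Ω → Ω} {B : Ω → Matrix (Fin N) (Fin N) ℝ}
    {d : ℕ} (hτ : Ergodic τ μ) (hB : ∀ i j, Measurable fun ω => B ω i j)
    (h : IsPrimitiveAlong τ B d) :
    ∃ v : Ω → Fin N → ℝ, IsPositiveUnitField v ∧
      (∀ᵐ ω ∂μ, MapsRay (B ω) (v (τ ω)) (v ω)) ∧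
      ∃ δ > 0, ∀ᵐ ω ∂μ, ColumnsConverge (orbitProd τ B · ω) (v ω) δ := by
  obtain ⟨v, hv_meas, hv_pos, hv_maps, δ, hδ, hv_conv⟩ := exists_equivariant_direction hτ hB h
  have hne : ∀ ω, v ω ≠ 0 := fun ω h0 => (hv_pos ω 0).ne' (congrFun h0 0)
  have hinv : ∀ ω, 0 < (enorm' (v ω))⁻¹ := fun ω => inv_pos.2 (enorm'_pos (hne ω))
  refine ⟨fun ω => (enorm' (v ω))⁻¹ • v ω, ⟨?_, fun ω i => mul_pos (hinv ω) (hv_pos ω i),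
    fun ω => enorm'_inv_smul_self (hne ω)⟩, ?_, δ, hδ, ?_⟩
  · exact (measurable_enorm'.comp hv_meas).inv.smul hv_meas
  · exact hv_maps.mono fun ω hω => hω.smul_smul (hinv _) (hinv _)
  · exact hv_conv.mono fun ω hω => hω.smul (hinv ω).ne'

theorem exists_ae_isPrincipalAt [NeZero N] {θ : Equiv.Perm Ω}
    {S : Ω → Matrix (Fin N) (Fin N) ℝ} {d : ℕ} (hθ : Ergodic θ μ)
    (hθ_symm : Ergodic θ.symm μ) (hS : ∀ i j, Measurable fun ω => S ω i j) (hd : d ≠ 0)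
    (hS_nonneg : ∀ ω i j, 0 ≤ S ω i j) (hpos : ∀ ω i j, 0 < Sprod θ S d ω i j) :
    ∃ w ws : Ω → Fin N → ℝ, IsPositiveUnitField w ∧ IsPositiveUnitField ws ∧
      (∀ᵐ ω ∂μ, IsPrincipalAt θ S w ws ω) ∧
      ∃ δ > 0, ∀ᵐ ω ∂μ, ColumnsConverge (fun n => (Sprod θ S n ω)ᵀ) (ws ω) δ := by
  obtain ⟨ws, hws, hws_maps, δ, hδ, hws_conv⟩ := exists_equivariant_unitField
    (B := fun ω => (S ω)ᵀ) hθ (fun i j => hS j i) (isPrimitiveAlong_transpose hd hS_nonneg hpos)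
  obtain ⟨w, hw, hw_maps, -⟩ := exists_equivariant_unitField
    (B := fun ω => S (θ.symm ω)) hθ_symm
    (fun i j => (hS i j).comp hθ_symm.measurable) (isPrimitiveAlong_symm hd hS_nonneg hpos)
  refine ⟨w, ws, hw, hws, ?_, δ, hδ, by simpa only [transpose_Sprod] using hws_conv⟩
  filter_upwards [hws_maps, hθ.quasiMeasurePreserving.ae hw_maps] with ω hω_ws hω_w
  exact ⟨by simpa only [θ.symm_apply_apply] using hω_w, hω_ws⟩

end PrincipalPair

section InvariantHyperplane

variable {N : ℕ} {M : Matrix (Fin N) (Fin N) ℝ} {a b u v w : Fin N → ℝ}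

lemma MapsRay.mulVec_eq_enorm'_smul (h : MapsRay M u v) (hv : enorm' v = 1) :
    M *ᵥ u = enorm' (M *ᵥ u) • v := by
  obtain ⟨c, hc, hcu⟩ := h
  rw [hcu, enorm'_smul, hv, mul_one, abs_of_pos hc]

lemma MapsRay.enorm'_mulVec_pos (h : MapsRay M u v) (hv : enorm' v = 1) :
    0 < enorm' (M *ᵥ u) := by
  obtain ⟨c, hc, hcu⟩ := h
  rwa [hcu, enorm'_smul, hv, mul_one, abs_of_pos hc]

lemma MapsRay.enorm'_mul_mulVec (h : MapsRay M u v) (hv : enorm' v = 1)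
    (M' : Matrix (Fin N) (Fin N) ℝ) :
    enorm' ((M' * M) *ᵥ u) = enorm' (M *ᵥ u) * enorm' (M' *ᵥ v) := by
  conv_lhs => rw [← mulVec_mulVec, h.mulVec_eq_enorm'_smul hv, mulVec_smul, enorm'_smul,
    abs_of_nonneg (enorm'_nonneg _)]

lemma MapsRay.mulVec_mem_hyperplane_iff (h : MapsRay Mᵀ b a) :
    M *ᵥ u ∈ hyperplane b ↔ u ∈ hyperplane a := by
  obtain ⟨c, hc, hcb⟩ := h
  rw [mem_hyperplane, mem_hyperplane, dotProduct_comm, dotProduct_mulVec, ← mulVec_transpose, hcb,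
    smul_dotProduct, smul_eq_mul, mul_eq_zero_iff_left hc.ne', dotProduct_comm]

lemma MapsRay.image_hyperplane (h : MapsRay Mᵀ b a) (hM : IsUnit M) :
    (M *ᵥ ·) '' (hyperplane a : Set (Fin N → ℝ)) = hyperplane b := by
  have hpre : (hyperplane a : Set (Fin N → ℝ)) = (M *ᵥ ·) ⁻¹' hyperplane b :=
    Set.ext fun u => h.mulVec_mem_hyperplane_iff.symm
  rw [hpre, image_preimage_eq _ (mulVec_surjective_iff_isUnit.2 hM)]

lemma hyperplane_inter_nonneg (ha : ∀ i, 0 < a i) :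
    (hyperplane a : Set (Fin N → ℝ)) ∩ {u | ∀ i, 0 ≤ u i} = {0} := by
  refine Subset.antisymm ?_ (singleton_subset_iff.2 ⟨zero_mem _, fun _ => le_rfl⟩)
  rintro u ⟨hu, hnonneg⟩
  have hterm := (Finset.sum_eq_zero_iff_of_nonneg fun i _ =>
    mul_nonneg (hnonneg i) (ha i).le).1 (mem_hyperplane.1 hu)
  exact funext fun i => (mul_eq_zero_iff_right (ha i).ne').1 (hterm i (Finset.mem_univ i))

lemma abs_mulVec_le_of_mem_hyperplane {ε : ℝ} (hM : ∀ i j, 0 ≤ M i j) (hu : u ∈ hyperplane a)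
    {i : Fin N} (hε : ∀ j, |M i j / ∑ k, M i k - a j / ∑ k, a k| ≤ ε) :
    |(M *ᵥ u) i| ≤ (∑ j, M i j) * (ε * (N * enorm' u)) := by
  have hε₀ : 0 ≤ ε := (abs_nonneg _).trans (hε i)
  have hrow : 0 ≤ ∑ j, M i j := Finset.sum_nonneg fun j _ => hM i j
  have hscale : ∀ j, (∑ k, M i k) * (M i j / ∑ k, M i k) = M i j := fun j =>
    mul_div_cancel_of_imp' fun h0 =>
      (Finset.sum_eq_zero_iff_of_nonneg fun k _ => hM i k).1 h0 j (Finset.mem_univ j)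
  have horth : ∑ j, a j / (∑ k, a k) * u j = 0 := by
    have hau : ∑ j, a j * u j = 0 := (dotProduct_comm a u).trans (mem_hyperplane.1 hu)
    simp only [div_mul_eq_mul_div, ← Finset.sum_div, hau, zero_div]
  have hdev : (M *ᵥ u) i = (∑ k, M i k) * ∑ j, (M i j / ∑ k, M i k - a j / ∑ k, a k) * u j := by
    simp only [sub_mul, Finset.sum_sub_distrib, horth, sub_zero, Finset.mul_sum, ← mul_assoc,
      hscale]
    rfl
  rw [hdev, abs_mul, abs_of_nonneg hrow]
  refine mul_le_mul_of_nonneg_left ?_ hrow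
  calc |∑ j, (M i j / ∑ k, M i k - a j / ∑ k, a k) * u j|
      ≤ ∑ j, ε * |u j| := (Finset.abs_sum_le_sum_abs _ _).trans <|
        Finset.sum_le_sum fun j _ => by
          rw [abs_mul]
          exact mul_le_mul_of_nonneg_right (hε j) (abs_nonneg _)
    _ ≤ ε * (N * enorm' u) := by
      rw [← Finset.mul_sum]
      exact mul_le_mul_of_nonneg_left (sum_abs_le_enorm' u) hε₀

lemma restrNorm_hyperplane_le_mul_enorm' {c ε : ℝ} (hM : ∀ i j, 0 ≤ M i j) (hc : 0 < c)
    (hw : ∀ i, c ≤ w i) (hε₀ : 0 ≤ ε)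
    (hε : ∀ i j, |M i j / ∑ k, M i k - a j / ∑ k, a k| ≤ ε) :
    restrNorm M (hyperplane a) ≤ ε * N / c * enorm' (M *ᵥ w) := by
  refine restrNorm_le (mul_nonneg (by positivity) (enorm'_nonneg _)) fun u hu => ?_
  have hκ : 0 ≤ ε * N / c * enorm' u := mul_nonneg (by positivity) (enorm'_nonneg u)
  have hrow : ∀ i, (∑ j, M i j) * c ≤ (M *ᵥ w) i := fun i => by
    rw [Finset.sum_mul]
    exact Finset.sum_le_sum fun j _ => mul_le_mul_of_nonneg_left (hw j) (hM i j)
  have hentry : ∀ i, |(M *ᵥ u) i| ≤ ((ε * N / c * enorm' u) • (M *ᵥ w)) i := fun i => by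
    calc |(M *ᵥ u) i| ≤ (∑ j, M i j) * (ε * (N * enorm' u)) :=
          abs_mulVec_le_of_mem_hyperplane hM hu (hε i)
      _ = ε * N / c * enorm' u * ((∑ j, M i j) * c) := by field_simp
      _ ≤ ε * N / c * enorm' u * (M *ᵥ w) i := mul_le_mul_of_nonneg_left (hrow i) hκ
  calc enorm' (M *ᵥ u) ≤ enorm' ((ε * N / c * enorm' u) • (M *ᵥ w)) := enorm'_mono hentry
    _ = ε * N / c * enorm' (M *ᵥ w) * enorm' u := by
      rw [enorm'_smul, abs_of_nonneg hκ, mul_right_comm]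

lemma exists_eventually_restrNorm_le [NeZero N] {P : ℕ → Matrix (Fin N) (Fin N) ℝ} {δ : ℝ}
    (hP : ∀ n i j, 0 ≤ P n i j) (hconv : ColumnsConverge (fun n => (P n)ᵀ) a δ)
    (hw : ∀ i, 0 < w i) :
    ∃ K : ℝ, 0 < K ∧ ∀ᶠ n : ℕ in atTop,
      restrNorm (P n) (hyperplane a) ≤ K * Real.exp (-δ * n) * enorm' (P n *ᵥ w) := by
  obtain ⟨K, hK, hbound⟩ := (Asymptotics.isBigO_pi.2 fun j =>
    Asymptotics.isBigO_pi.2 fun i => hconv j i).exists_pos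
  have hc : 0 < ⨅ i, w i := iInf_pos_of_finite hw
  have hN : 0 < (N : ℝ) := Nat.cast_pos.2 (NeZero.pos N)
  refine ⟨K * N / ⨅ i, w i, by positivity, ?_⟩
  filter_upwards [hbound.bound] with n hn
  rw [Real.norm_of_nonneg (Real.exp_pos _).le] at hn
  calc restrNorm (P n) (hyperplane a)
      ≤ K * Real.exp (-δ * n) * N / (⨅ i, w i) * enorm' (P n *ᵥ w) :=
        restrNorm_hyperplane_le_mul_enorm' (hP n) hc (iInf_le_of_finite w) (by positivity)
          fun i j => (norm_le_pi_norm _ i).trans ((norm_le_pi_norm _ j).trans hn)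
    _ = K * N / (⨅ i, w i) * Real.exp (-δ * n) * enorm' (P n *ᵥ w) := by ring

end InvariantHyperplane

section GrowthRates

variable {Ω : Type*} {N : ℕ} {θ : Equiv.Perm Ω} {S : Ω → Matrix (Fin N) (Fin N) ℝ}
  {w ws : Ω → Fin N → ℝ} {ω : Ω}

lemma mapsRay_Sprod (h : ∀ k, IsPrincipalAt θ S w ws (θ^[k] ω)) (n : ℕ) :
    MapsRay (Sprod θ S n ω) (w ω) (w (θ^[n] ω)) := by
  induction n with
  | zero => exact .one _
  | succ n ih =>
    rw [Sprod_add_one, Function.iterate_succ_apply']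
    exact (h n).mapsRay.mul ih

lemma mapsRay_transpose_Sprod (h : ∀ k, IsPrincipalAt θ S w ws (θ^[k] ω)) (n : ℕ) :
    MapsRay (Sprod θ S n ω)ᵀ (ws (θ^[n] ω)) (ws ω) := by
  induction n with
  | zero => simpa [Sprod] using MapsRay.one (ws ω)
  | succ n ih =>
    rw [Sprod_add_one, transpose_mul, Function.iterate_succ_apply']
    exact ih.mul (h n).mapsRay_transpose

/-- Logarithmic growth of the cocycle along the vector field `w`. -/
noncomputable def logGrowth (θ : Equiv.Perm Ω) (S : Ω → Matrix (Fin N) (Fin N) ℝ)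
    (w : Ω → Fin N → ℝ) (n : ℕ) (ω : Ω) : ℝ :=
  Real.log (enorm' (Sprod θ S n ω *ᵥ w ω))

/-- Logarithmic growth of the cocycle on the hyperplanes normal to `ws`, relative to its growth
along `w`. -/
noncomputable def logSeparation (θ : Equiv.Perm Ω) (S : Ω → Matrix (Fin N) (Fin N) ℝ)
    (w ws : Ω → Fin N → ℝ) (n : ℕ) (ω : Ω) : ℝ :=
  Real.log (restrNorm (Sprod θ S n ω) (hyperplane (ws ω))) - logGrowth θ S w n ω

variable [MeasurableSpace Ω]

lemma logGrowth_add (hw : IsPositiveUnitField w) (h : ∀ k, IsPrincipalAt θ S w ws (θ^[k] ω))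
    (m n : ℕ) : logGrowth θ S w (m + n) ω = logGrowth θ S w m ω + logGrowth θ S w n (θ^[m] ω) := by
  have hshift : ∀ k, IsPrincipalAt θ S w ws (θ^[k] (θ^[m] ω)) := fun k => by
    simpa only [← Function.iterate_add_apply] using h (k + m)
  have hm := mapsRay_Sprod h m
  have hn := mapsRay_Sprod hshift n
  rw [logGrowth, Sprod_add, hm.enorm'_mul_mulVec (hw.enorm'_eq_one _)]
  exact Real.log_mul (hm.enorm'_mulVec_pos (hw.enorm'_eq_one _)).ne'
    (hn.enorm'_mulVec_pos (hw.enorm'_eq_one _)).ne'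

lemma logGrowth_eq_birkhoffSum (hw : IsPositiveUnitField w)
    (h : ∀ k, IsPrincipalAt θ S w ws (θ^[k] ω)) (n : ℕ) :
    logGrowth θ S w n ω = birkhoffSum θ (logGrowth θ S w 1) n ω := by
  induction n with
  | zero => simp [logGrowth, Sprod, hw.enorm'_eq_one]
  | succ n ih => rw [birkhoffSum_succ, logGrowth_add hw h, ih]

lemma subadditiveAt_logSeparation (hN : 2 ≤ N) (hw : IsPositiveUnitField w)
    (hS : ∀ ω, IsUnit (S ω)) (h : ∀ k, IsPrincipalAt θ S w ws (θ^[k] ω)) :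
    SubadditiveAt θ (logSeparation θ S w ws) ω := by
  intro m n
  have hpos : ∀ k ω, 0 < restrNorm (Sprod θ S k ω) (hyperplane (ws ω)) := fun k ω =>
    restrNorm_pos (isUnit_Sprod hS k ω) (hyperplane_ne_bot hN _)
  have hmul : restrNorm (Sprod θ S (m + n) ω) (hyperplane (ws ω)) ≤
      restrNorm (Sprod θ S n (θ^[m] ω)) (hyperplane (ws (θ^[m] ω))) *
        restrNorm (Sprod θ S m ω) (hyperplane (ws ω)) := by
    rw [Sprod_add]
    exact restrNorm_mul_le fun u hu => (mapsRay_transpose_Sprod h m).mulVec_mem_hyperplane_iff.2 hu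
  have hlog := Real.log_le_log (hpos _ _) hmul
  rw [Real.log_mul (hpos _ _).ne' (hpos _ _).ne'] at hlog
  rw [logSeparation, logSeparation, logSeparation, logGrowth_add hw h]
  linarith

lemma measurable_logGrowth (hθ : Measurable θ) (hS : ∀ i j, Measurable fun ω => S ω i j)
    (hw : Measurable w) (n : ℕ) : Measurable (logGrowth θ S w n) := by
  refine (measurable_enorm'.comp (measurable_pi_lambda _ fun i => ?_)).log
  simp only [mulVec, dotProduct]
  exact Finset.measurable_fun_sum _ fun j _ =>
    (measurable_Sprod_apply hθ hS n i j).mul ((measurable_pi_apply j).comp hw)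

lemma measurable_logSeparation (hθ : Measurable θ) (hS : ∀ i j, Measurable fun ω => S ω i j)
    (hw : Measurable w) (hws : IsPositiveUnitField ws) (n : ℕ) :
    Measurable (logSeparation θ S w ws n) :=
  (measurable_restrNorm_hyperplane (measurable_Sprod_apply hθ hS n) hws.measurable
    hws.enorm'_eq_one).log.sub (measurable_logGrowth hθ hS hw n)

end GrowthRates

/-! ### Lyapunov exponents -/

section LogBounds

lemma abs_log_le_add_lnminus_add_lnplus {a b x C : ℝ} (hC : 0 < C) (ha : 0 < a)
    (hax : a ≤ C * x) (hxb : x ≤ C * b) : |Real.log x| ≤ Real.log C + lnminus a + lnplus b := by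
  have hx : 0 < x := pos_of_mul_pos_right (ha.trans_le hax) hC.le
  have hb : 0 < b := pos_of_mul_pos_right (hx.trans_le hxb) hC.le
  have hlower := Real.log_le_log ha hax
  have hupper := Real.log_le_log hx hxb
  rw [Real.log_mul hC.ne' hx.ne'] at hlower
  rw [Real.log_mul hC.ne' hb.ne'] at hupper
  have hminus : -Real.log a ≤ lnminus a ∧ 0 ≤ lnminus a := ⟨le_max_left _ _, le_max_right _ _⟩
  have hplus : Real.log b ≤ lnplus b ∧ 0 ≤ lnplus b := ⟨le_max_left _ _, le_max_right _ _⟩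
  rw [abs_le]
  constructor <;> linarith [hminus.1, hminus.2, hplus.1, hplus.2]

variable {N : ℕ} {M : Matrix (Fin N) (Fin N) ℝ} {w : Fin N → ℝ} {a b : ℝ}

lemma le_mul_enorm'_mulVec (ha : 0 ≤ a) (hM : ∀ j, a ≤ ∑ i, M i j) (hw : ∀ i, 0 ≤ w i)
    (hw_one : enorm' w = 1) : a ≤ N * enorm' (M *ᵥ w) := by
  have hone : 1 ≤ ∑ i, w i := by
    simpa only [hw_one, abs_of_nonneg (hw _)] using enorm'_le_sum_abs w
  calc a ≤ a * ∑ j, w j := le_mul_of_one_le_right ha hone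
    _ ≤ ∑ j, (∑ i, M i j) * w j := by
      rw [Finset.mul_sum]
      exact Finset.sum_le_sum fun j _ => mul_le_mul_of_nonneg_right (hM j) (hw j)
    _ = ∑ i, (M *ᵥ w) i := by
      simp only [mulVec, dotProduct, Finset.sum_mul]
      exact Finset.sum_comm
    _ ≤ ∑ i, |(M *ᵥ w) i| := Finset.sum_le_sum fun i _ => le_abs_self _
    _ ≤ N * enorm' (M *ᵥ w) := sum_abs_le_enorm' _

lemma restrNorm_le_of_abs_le [NeZero N] (hM : ∀ i j, |M i j| ≤ b)
    (F : Submodule ℝ (Fin N → ℝ)) : restrNorm M F ≤ (N * N) * b :=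
  have hb : 0 ≤ b := (abs_nonneg _).trans (hM 0 0)
  restrNorm_le (by positivity) fun u _ =>
    (enorm'_mulVec_le_of_abs_le hM u).trans_eq (by ring)

lemma abs_log_enorm'_mulVec_le (hM : ∀ i j, 0 ≤ M i j) (hM_le : ∀ i j, M i j ≤ b) (ha : 0 < a)
    (hM_ge : ∀ j, a ≤ ∑ i, M i j) (hw : ∀ i, 0 ≤ w i) (hw_one : enorm' w = 1) :
    |Real.log (enorm' (M *ᵥ w))| ≤ Real.log (N * N) + lnminus a + lnplus b := by
  have hlower := le_mul_enorm'_mulVec ha.le hM_ge hw hw_one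
  have hN : 1 ≤ (N : ℝ) := by
    rcases N with _ | N
    · exact absurd (hlower.trans_eq (by simp)) ha.not_ge
    · simp
  refine abs_log_le_add_lnminus_add_lnplus (by positivity) ha (hlower.trans ?_) ?_
  · exact mul_le_mul_of_nonneg_right (le_mul_of_one_le_left (by positivity) hN) (enorm'_nonneg _)
  · have hupper := enorm'_mulVec_le_of_abs_le (fun i j => (abs_of_nonneg (hM i j)).trans_le
      (hM_le i j)) w
    rw [hw_one] at hupper
    exact hupper.trans_eq (by ring)

end LogBounds

section LyapunovExponents

variable {Ω : Type*} {N : ℕ} {θ : Equiv.Perm Ω} {S : Ω → Matrix (Fin N) (Fin N) ℝ}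
  {w ws : Ω → Fin N → ℝ}

lemma limsup_log_enorm'_mulVec_le {lam : ℝ} {ω : Ω} (hS_nonneg : ∀ ω i j, 0 ≤ S ω i j)
    (hS_unit : ∀ ω, IsUnit (S ω)) (hw : ∀ i, 0 < w ω i)
    (hlim : Tendsto (fun n : ℕ => (n : ℝ)⁻¹ * logGrowth θ S w n ω) atTop (𝓝 lam))
    {u : Fin N → ℝ} (hu : u ≠ 0) :
    limsup (fun n : ℕ => (((n : ℝ)⁻¹ * Real.log (enorm' (Sprod θ S n ω *ᵥ u)) : ℝ) : EReal)) atTop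
      ≤ lam := by
  have hpos : ∀ v ≠ 0, ∀ n, 0 < enorm' (Sprod θ S n ω *ᵥ v) := fun v hv n =>
    enorm'_pos fun h0 => hv <|
      mulVec_injective_iff_isUnit.2 (isUnit_Sprod hS_unit n ω) (h0.trans (mulVec_zero _).symm)
  obtain ⟨C, hC, huC⟩ : ∃ C > 0, ∀ i, |u i| ≤ C * w ω i := by
    have hterm : ∀ i ∈ Finset.univ, 0 ≤ |u i| / w ω i := fun i _ =>
      div_nonneg (abs_nonneg _) (hw i).le
    refine ⟨1 + ∑ i, |u i| / w ω i, add_pos_of_pos_of_nonneg one_pos (Finset.sum_nonneg hterm),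
      fun i => (div_le_iff₀ (hw i)).1 ?_⟩
    linarith [Finset.single_le_sum hterm (Finset.mem_univ i)]
  have hw_ne : w ω ≠ 0 := fun h0 => hu <| funext fun i => (hw i).ne' (congrFun h0 i) |>.elim
  have hupper : Tendsto (fun n : ℕ => (n : ℝ)⁻¹ * Real.log C + (n : ℝ)⁻¹ * logGrowth θ S w n ω)
      atTop (𝓝 lam) := by
    simpa using (tendsto_inv_atTop_nhds_zero_nat (𝕜 := ℝ)).mul_const (Real.log C) |>.add hlim
  refine (limsup_le_limsup (.of_forall fun n => ?_)).trans_eq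
    (continuous_coe_real_ereal.tendsto lam |>.comp hupper).limsup_eq
  rw [Function.comp_apply, EReal.coe_le_coe_iff, ← mul_add, logGrowth,
    ← Real.log_mul hC.ne' (hpos _ hw_ne n).ne']
  exact mul_le_mul_of_nonneg_left (Real.log_le_log (hpos u hu n)
    (enorm'_mulVec_le_mul_of_abs_le (Sprod_nonneg hS_nonneg n ω) hC.le huC)) (by positivity)

lemma le_neg_of_columnsConverge {c : EReal} {δ : ℝ} {ω : Ω} (hN : 2 ≤ N)
    (hS_nonneg : ∀ ω i j, 0 ≤ S ω i j) (hS_unit : ∀ ω, IsUnit (S ω)) (hw : ∀ i, 0 < w ω i)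
    (hconv : ColumnsConverge (fun n => (Sprod θ S n ω)ᵀ) (ws ω) δ)
    (hlim : Tendsto (fun n : ℕ => (((n : ℝ)⁻¹ * logSeparation θ S w ws n ω : ℝ) : EReal)) atTop
      (𝓝 c)) : c ≤ ((-δ : ℝ) : EReal) := by
  have : NeZero N := ⟨by omega⟩
  obtain ⟨K, hK, hle⟩ :=
    exists_eventually_restrNorm_le (fun n => Sprod_nonneg hS_nonneg n ω) hconv hw
  have hupper : Tendsto (fun n : ℕ => (n : ℝ)⁻¹ * Real.log K + -δ) atTop (𝓝 (-δ)) := by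
    simpa using ((tendsto_inv_atTop_nhds_zero_nat (𝕜 := ℝ)).mul_const (Real.log K)).add_const (-δ)
  refine le_of_tendsto_of_tendsto hlim (continuous_coe_real_ereal.tendsto _ |>.comp hupper) ?_
  filter_upwards [hle, eventually_gt_atTop 0] with n hn hn₀
  have hrestr : 0 < restrNorm (Sprod θ S n ω) (hyperplane (ws ω)) :=
    restrNorm_pos (isUnit_Sprod hS_unit n ω) (hyperplane_ne_bot hN _)
  have hgrowth : 0 < enorm' (Sprod θ S n ω *ᵥ w ω) :=
    pos_of_mul_pos_right (hrestr.trans_le hn) (by positivity)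
  have hlog := Real.log_le_log hrestr hn
  rw [Real.log_mul (by positivity) hgrowth.ne', Real.log_mul hK.ne' (Real.exp_pos _).ne',
    Real.log_exp] at hlog
  have hn' : (0 : ℝ) < n := Nat.cast_pos.2 hn₀
  rw [Function.comp_apply, EReal.coe_le_coe_iff, inv_mul_le_iff₀ hn', mul_add,
    mul_inv_cancel_left₀ hn'.ne', logSeparation, logGrowth]
  linarith

variable [MeasurableSpace Ω] {μ : Measure Ω} [IsProbabilityMeasure μ] {m₀ M₀ : Ω → ℝ}

lemma integrable_logGrowth_one (hθ : Measurable θ)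
    (hS : ∀ i j, Measurable fun ω => S ω i j)
    (hS_nonneg : ∀ ω i j, 0 ≤ S ω i j) (hm₀ : ∀ ω, 0 < m₀ ω) (hS_ge : ∀ ω j, m₀ ω ≤ ∑ i, S ω i j)
    (hS_le : ∀ ω i j, S ω i j ≤ M₀ ω) (hm₀_int : Integrable (fun ω => lnminus (m₀ ω)) μ)
    (hM₀_int : Integrable (fun ω => lnplus (M₀ ω)) μ) (hw : IsPositiveUnitField w) :
    Integrable (logGrowth θ S w 1) μ := by
  refine (((integrable_const (Real.log (N * N))).add hm₀_int).add hM₀_int).mono'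
    (measurable_logGrowth hθ hS hw.measurable 1).aestronglyMeasurable (.of_forall fun ω => ?_)
  rw [logGrowth, Sprod_one]
  exact abs_log_enorm'_mulVec_le (hS_nonneg ω) (hS_le ω) (hm₀ ω) (hS_ge ω)
    (fun i => (hw.pos ω i).le) (hw.enorm'_eq_one ω)

lemma integrable_max_logSeparation_one (hN : 2 ≤ N) (hθ : Measurable θ)
    (hS : ∀ i j, Measurable fun ω => S ω i j) (hS_unit : ∀ ω, IsUnit (S ω))
    (hS_le : ∀ ω i j, |S ω i j| ≤ M₀ ω) (hM₀_int : Integrable (fun ω => lnplus (M₀ ω)) μ)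
    (hw : Measurable w) (hws : IsPositiveUnitField ws)
    (hgrowth : Integrable (logGrowth θ S w 1) μ) :
    Integrable (fun ω => max (logSeparation θ S w ws 1 ω) 0) μ := by
  refine (((integrable_const (Real.log (N * N))).add hM₀_int).add hgrowth.abs).mono'
    ((measurable_logSeparation hθ hS hw hws 1).max measurable_const).aestronglyMeasurable
    (.of_forall fun ω => ?_)
  have : NeZero N := ⟨by omega⟩
  have hN₁ : 1 ≤ (N : ℝ) := Nat.one_le_cast.2 (NeZero.pos N)
  have hpos : 0 < restrNorm (S ω) (hyperplane (ws ω)) :=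
    restrNorm_pos (hS_unit ω) (hyperplane_ne_bot hN _)
  have hle := restrNorm_le_of_abs_le (hS_le ω) (hyperplane (ws ω))
  have hM₀ : 0 < M₀ ω := pos_of_mul_pos_right (hpos.trans_le hle) (by positivity)
  have hlog := Real.log_le_log hpos hle
  rw [Real.log_mul (by positivity) hM₀.ne'] at hlog
  have hlnplus : Real.log (M₀ ω) ≤ lnplus (M₀ ω) ∧ 0 ≤ lnplus (M₀ ω) :=
    ⟨le_max_left _ _, le_max_right _ _⟩
  have hlogN : 0 ≤ Real.log (N * N) := Real.log_nonneg (one_le_mul_of_one_le_of_one_le hN₁ hN₁)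
  rw [Real.norm_of_nonneg (le_max_right _ _)]
  refine max_le ?_ (add_nonneg (add_nonneg hlogN hlnplus.2) (abs_nonneg _))
  rw [logSeparation, Sprod_one]
  simp only [Pi.add_apply]
  linarith [neg_abs_le (logGrowth θ S w 1 ω), hlnplus.1]

theorem exists_ae_tendsto_logGrowth (hθ : Ergodic θ μ) (hw : IsPositiveUnitField w)
    (hint : Integrable (logGrowth θ S w 1) μ) (h : ∀ᵐ ω ∂μ, IsPrincipalAt θ S w ws ω) :
    ∃ lam : ℝ, ∀ᵐ ω ∂μ,
      Tendsto (fun n : ℕ => (n : ℝ)⁻¹ * logGrowth θ S w n ω) atTop (𝓝 lam) := by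
  refine ⟨∫ ω, logGrowth θ S w 1 ω ∂μ, ?_⟩
  filter_upwards [ae_forall_iterate hθ.quasiMeasurePreserving h,
    ae_tendsto_birkhoffAverage hθ hint] with ω hω hlim
  simpa only [birkhoffAverage, smul_eq_mul, ← logGrowth_eq_birkhoffSum hw hω] using hlim

theorem exists_ae_tendsto_logSeparation (hN : 2 ≤ N) (hθ : Ergodic θ μ)
    (hS : ∀ i j, Measurable fun ω => S ω i j) (hS_nonneg : ∀ ω i j, 0 ≤ S ω i j)
    (hS_unit : ∀ ω, IsUnit (S ω)) (hw : IsPositiveUnitField w) (hws : IsPositiveUnitField ws)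
    (h : ∀ᵐ ω ∂μ, IsPrincipalAt θ S w ws ω)
    (hint : Integrable (fun ω => max (logSeparation θ S w ws 1 ω) 0) μ)
    {δ : ℝ} (hδ : 0 < δ)
    (hconv : ∀ᵐ ω ∂μ, ColumnsConverge (fun n => (Sprod θ S n ω)ᵀ) (ws ω) δ) :
    ∃ σ : EReal, 0 < σ ∧ ∀ᵐ ω ∂μ, Tendsto
      (fun n : ℕ => (((n : ℝ)⁻¹ * logSeparation θ S w ws n ω : ℝ) : EReal)) atTop (𝓝 (-σ)) := by
  obtain ⟨c, hc⟩ := exists_ae_tendsto_of_subadditive hθ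
    (measurable_logSeparation hθ.measurable hS hw.measurable hws)
    ((ae_forall_iterate hθ.quasiMeasurePreserving h).mono fun ω hω =>
      subadditiveAt_logSeparation hN hw hS_unit hω) hint
  obtain ⟨ω, hω_conv, hω_lim⟩ := (hconv.and hc).exists
  have hneg : c < 0 :=
    (le_neg_of_columnsConverge hN hS_nonneg hS_unit (hw.pos ω) hω_conv hω_lim).trans_lt
      (EReal.coe_neg'.2 (neg_neg_of_pos hδ))
  exact ⟨-c, EReal.neg_pos.2 hneg, by simpa only [neg_neg] using hc⟩

end LyapunovExponents

/-! ### Leslie matrices -/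

section Leslie

variable {N : ℕ} {m b : Fin N → ℝ}

/-- The Leslie matrix with first row `m` and subdiagonal `b`; the last entry of `b` is not used. -/
def leslie (m b : Fin N → ℝ) : Matrix (Fin N) (Fin N) ℝ :=
  fun i j => if (i : ℕ) = 0 then m j else if (i : ℕ) = (j : ℕ) + 1 then b j else 0

lemma leslie_zero [NeZero N] (m b : Fin N → ℝ) (j : Fin N) : leslie m b 0 j = m j := by
  simp [leslie]

lemma leslie_of_val_eq {i j : Fin N} (h : (i : ℕ) = j + 1) : leslie m b i j = b j := by
  simp [leslie, h]

lemma leslie_nonneg (hm : ∀ j, 0 ≤ m j) (hb : ∀ j : Fin N, (j : ℕ) + 1 < N → 0 ≤ b j)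
    (i j : Fin N) : 0 ≤ leslie m b i j := by
  unfold leslie
  split_ifs with h₀ h₁
  · exact hm j
  · exact hb j (h₁ ▸ i.isLt)
  · exact le_rfl

lemma leslie_le {M₀ : ℝ} (hM₀ : 0 ≤ M₀) (hm : ∀ j, m j ≤ M₀)
    (hb : ∀ j : Fin N, (j : ℕ) + 1 < N → b j ≤ M₀) (i j : Fin N) : leslie m b i j ≤ M₀ := by
  unfold leslie
  split_ifs with h₀ h₁
  · exact hm j
  · exact hb j (h₁ ▸ i.isLt)
  · exact hM₀

lemma le_sum_leslie [NeZero N] (hm : ∀ j, 0 ≤ m j)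
    (hb : ∀ j : Fin N, (j : ℕ) + 1 < N → 0 ≤ b j) (j : Fin N) : m j ≤ ∑ i, leslie m b i j :=
  (leslie_zero m b j).symm.trans_le <|
    Finset.single_le_sum (fun i _ => leslie_nonneg hm hb i j) (Finset.mem_univ 0)

lemma leslie_mulVec_of_val_eq {i j : Fin N} (h : (i : ℕ) = j + 1) (u : Fin N → ℝ) :
    (leslie m b *ᵥ u) i = b j * u j := by
  rw [mulVec, dotProduct, Finset.sum_eq_single j, leslie_of_val_eq h]
  · intro k _ hk
    have hjk : (j : ℕ) ≠ k := fun hjk => hk (Fin.ext hjk.symm)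
    simp [leslie, h, hjk]
  · exact fun hj => absurd (Finset.mem_univ j) hj

lemma isUnit_leslie [NeZero N] (hm : ∀ j : Fin N, (j : ℕ) + 1 = N → m j ≠ 0)
    (hb : ∀ j : Fin N, (j : ℕ) + 1 < N → b j ≠ 0) : IsUnit (leslie m b) := by
  refine mulVec_injective_iff_isUnit.1 <|
    (injective_iff_map_eq_zero (leslie m b).mulVecLin).2 fun u hu => ?_
  have hu_row : ∀ i, (leslie m b *ᵥ u) i = 0 := congrFun hu
  have hu_lt : ∀ j : Fin N, (j : ℕ) + 1 < N → u j = 0 := fun j hj =>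
    (mul_eq_zero_iff_left (hb j hj)).1 <|
      (leslie_mulVec_of_val_eq (i := ⟨j + 1, hj⟩) rfl u).symm.trans (hu_row _)
  ext j
  rcases (Nat.succ_le_of_lt j.isLt).lt_or_eq with hj | hj
  · exact hu_lt j hj
  · have hfirst := hu_row 0
    simp only [mulVec, dotProduct, leslie_zero] at hfirst
    rw [Finset.sum_eq_single j (fun k _ hk => by rw [hu_lt k (by omega), mul_zero])
      (fun h => absurd (Finset.mem_univ j) h)] at hfirst
    exact (mul_eq_zero_iff_left (hm j hj)).1 hfirst

variable {Ω : Type*} {θ : Equiv.Perm Ω} {m b : Ω → Fin N → ℝ}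

/-- In `n` steps every class feeds the classes `0, …, n - 1` and the one `n` steps older. -/
lemma Sprod_leslie_pos [NeZero N] (hm : ∀ ω j, 0 < m ω j)
    (hb : ∀ ω (j : Fin N), (j : ℕ) + 1 < N → 0 < b ω j) {n : ℕ} {i j : Fin N}
    (h : (i : ℕ) < n ∨ (i : ℕ) = j + n) (ω : Ω) :
    0 < Sprod θ (fun ω => leslie (m ω) (b ω)) n ω i j := by
  have hS : ∀ ω i j, 0 ≤ leslie (m ω) (b ω) i j := fun ω =>
    leslie_nonneg (fun j => (hm ω j).le) fun j hj => (hb ω j hj).le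
  induction n generalizing i with
  | zero =>
    obtain rfl : i = j := Fin.ext (h.resolve_left (Nat.not_lt_zero _))
    simp [Sprod]
  | succ n ih =>
    suffices hk : ∃ k : Fin N, 0 < leslie (m (θ^[n] ω)) (b (θ^[n] ω)) i k ∧
        ((k : ℕ) < n ∨ (k : ℕ) = j + n) by
      obtain ⟨k, hik, hkj⟩ := hk
      rw [Sprod_add_one, Matrix.mul_apply]
      exact Finset.sum_pos' (fun l _ => mul_nonneg (hS _ i l) (Sprod_nonneg hS n ω l j))
        ⟨k, Finset.mem_univ k, mul_pos hik (ih hkj)⟩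
    rcases Nat.eq_zero_or_pos i with hi | hi
    · obtain rfl : i = 0 := Fin.ext (by simpa using hi)
      simp only [leslie_zero, hm, true_and]
      rcases Nat.eq_zero_or_pos n with rfl | hn
      · exact ⟨j, .inr rfl⟩
      · exact ⟨0, .inl hn⟩
    · let k : Fin N := ⟨i - 1, by omega⟩
      have hik : (i : ℕ) = k + 1 := (Nat.succ_pred_eq_of_pos hi).symm
      exact ⟨k, by rw [leslie_of_val_eq hik]; exact hb _ k (hik ▸ i.isLt), by omega⟩

end Leslie

end PositiveCocycle

open PositiveCocycle

/-- All that matters about Leslie matrices is that they are non-negative and invertible and that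
their products of some length `d` are positive. -/
theorem stmt_11_general {N : ℕ} (hN : 2 ≤ N)
    {Ω : Type*} [MeasurableSpace Ω] (ℙ : Measure Ω) [IsProbabilityMeasure ℙ]
    (θ : Equiv.Perm Ω) (hθinvmeas : Measurable θ.symm) (hθerg : Ergodic (θ : Ω → Ω) ℙ)
    (S : Ω → Matrix (Fin N) (Fin N) ℝ)
    (hSmeas : ∀ i j, Measurable fun ω => S ω i j)
    (hSnonneg : ∀ ω i j, 0 ≤ S ω i j) (hSunit : ∀ ω, IsUnit (S ω))
    {d : ℕ} (hd : d ≠ 0) (hSpos : ∀ ω i j, 0 < Sprod θ S d ω i j)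
    {m₀ M₀ : Ω → ℝ} (hm₀ : ∀ ω, 0 < m₀ ω) (hS_ge : ∀ ω j, m₀ ω ≤ ∑ i, S ω i j)
    (hS_le : ∀ ω i j, S ω i j ≤ M₀ ω)
    (hm₀_int : Integrable (fun ω => lnminus (m₀ ω)) ℙ)
    (hM₀_int : Integrable (fun ω => lnplus (M₀ ω)) ℙ) :
    ∃ Ω1 : Set Ω, MeasurableSet Ω1 ∧ (∀ ω, ω ∈ Ω1 ↔ θ ω ∈ Ω1) ∧ ℙ Ω1 = 1 ∧
      ∃ w ws : Ω → Fin N → ℝ, Measurable w ∧ Measurable ws ∧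
        (∀ ω ∈ Ω1, (∀ i, 0 < w ω i) ∧ enorm' (w ω) = 1 ∧
          (∀ i, 0 < ws ω i) ∧ enorm' (ws ω) = 1) ∧
        ∃ F : Ω → Set (Fin N → ℝ),
          (∀ ω, F ω = {u : Fin N → ℝ | ∑ i, u i * ws ω i = 0}) ∧
          ∃ lam : ℝ, ∃ σ : EReal, 0 < σ ∧
            (∀ ω ∈ Ω1, (fun u => (S ω).mulVec u) ''
                ((Submodule.span ℝ {w ω} : Submodule ℝ (Fin N → ℝ)) : Set (Fin N → ℝ)) =
              ((Submodule.span ℝ {w (θ ω)} : Submodule ℝ (Fin N → ℝ)) : Set (Fin N → ℝ))) ∧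
            (∀ ω ∈ Ω1, (fun u => (S ω).mulVec u) '' F ω = F (θ ω)) ∧
            (∀ ω ∈ Ω1, F ω ∩ {u : Fin N → ℝ | ∀ i, 0 ≤ u i} = {0}) ∧
            (∀ ω ∈ Ω1, Tendsto (fun n : ℕ => (n : ℝ)⁻¹ *
                Real.log (enorm' ((Sprod θ S n ω).mulVec (w ω)))) atTop (nhds lam)) ∧
            (∀ ω ∈ Ω1, ∀ u : Fin N → ℝ, u ≠ 0 →
              limsup (fun n : ℕ => (((n : ℝ)⁻¹ *
                Real.log (enorm' ((Sprod θ S n ω).mulVec u))) : EReal)) atTop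
                ≤ (lam : EReal)) ∧
            (∀ ω ∈ Ω1, Tendsto (fun n : ℕ => (((n : ℝ)⁻¹ *
                (Real.log (restrNorm (Sprod θ S n ω) (F ω)) -
                 Real.log (enorm' ((Sprod θ S n ω).mulVec (w ω))))) : EReal))
                atTop (nhds (-σ))) := by
  have : NeZero N := ⟨by omega⟩
  have hθsymm : Ergodic θ.symm ℙ :=
    Ergodic.symm (e := ⟨θ, hθerg.measurable, hθinvmeas⟩) hθerg
  obtain ⟨w, ws, hw, hws, hprincipal, δ, hδ, hconv⟩ :=
    exists_ae_isPrincipalAt hθerg hθsymm hSmeas hd hSnonneg hSpos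
  have hgrowth := integrable_logGrowth_one hθerg.measurable hSmeas hSnonneg hm₀ hS_ge hS_le
    hm₀_int hM₀_int hw
  obtain ⟨lam, hlam⟩ := exists_ae_tendsto_logGrowth hθerg hw hgrowth hprincipal
  have hseparation := integrable_max_logSeparation_one hN hθerg.measurable hSmeas hSunit
    (fun ω i j => (abs_of_nonneg (hSnonneg ω i j)).trans_le (hS_le ω i j)) hM₀_int hw.measurable
    hws hgrowth
  obtain ⟨σ, hσ, hσ_lim⟩ := exists_ae_tendsto_logSeparation hN hθerg hSmeas hSnonneg hSunit hw hws
    hprincipal hseparation hδ hconv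
  obtain ⟨Ω1, hΩ1, hinv, hfull, hgood⟩ := exists_measurable_invariant_of_ae
    hθerg.quasiMeasurePreserving hθsymm.quasiMeasurePreserving
    (hprincipal.and (hlam.and hσ_lim))
  refine ⟨Ω1, hΩ1, hinv, (mem_ae_iff_prob_eq_one hΩ1).1 hfull, w, ws, hw.measurable, hws.measurable,
    fun ω _ => ⟨hw.pos ω, hw.enorm'_eq_one ω, hws.pos ω, hws.enorm'_eq_one ω⟩,
    fun ω => hyperplane (ws ω), fun ω => rfl, lam, σ, hσ,
    fun ω hω => (hgood ω hω).1.mapsRay.image_span,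
    fun ω hω => (hgood ω hω).1.mapsRay_transpose.image_hyperplane (hSunit ω),
    fun ω _ => hyperplane_inter_nonneg (hws.pos ω),
    fun ω hω => (hgood ω hω).2.1, fun ω hω u hu => ?_, fun ω hω => ?_⟩
  · exact limsup_log_enorm'_mulVec_le hSnonneg hSunit (hw.pos ω) (hgood ω hω).2.1 hu
  · exact (hgood ω hω).2.2

/-- Random Leslie matrices: principal Floquet subspaces, finite
principal Lyapunov exponent, and generalized exponential separation. -/
theorem stmt_11 {N : ℕ} (hN : 2 ≤ N)
    {Ω : Type*} [MeasurableSpace Ω] (ℙ : Measure Ω) [IsProbabilityMeasure ℙ]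
    (θ : Equiv.Perm Ω) (hθmeas : Measurable θ) (hθinvmeas : Measurable θ.symm)
    (hθmp : MeasurePreserving θ ℙ ℙ) (hθerg : Ergodic (θ : Ω → Ω) ℙ)
    (S : Ω → Matrix (Fin N) (Fin N) ℝ)
    (hSmeas : ∀ i j, Measurable fun ω => S ω i j)
    (m b : Ω → Fin N → ℝ)
    (hLeslie : ∀ ω i j, S ω i j =
      if (i : ℕ) = 0 then m ω j
      else if (i : ℕ) = (j : ℕ) + 1 then b ω j else 0)
    (hmpos : ∀ ω j, 0 < m ω j)
    (hbpos : ∀ ω (j : Fin N), (j : ℕ) + 1 < N → 0 < b ω j)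
    (hm0 : Integrable (fun ω => lnminus
      (min (⨅ j, m ω j) (⨅ j : {j : Fin N // (j : ℕ) + 1 < N}, b ω j.1))) ℙ)
    (hM0 : Integrable (fun ω => lnplus
      (max (⨆ j, m ω j) (⨆ j : {j : Fin N // (j : ℕ) + 1 < N}, b ω j.1))) ℙ) :
    -- all entries of the N-fold product are strictly positive
    (∀ ω i j, 0 < Sprod θ S N ω i j) ∧
    ∃ Ω1 : Set Ω, MeasurableSet Ω1 ∧ (∀ ω, ω ∈ Ω1 ↔ θ ω ∈ Ω1) ∧ ℙ Ω1 = 1 ∧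
      ∃ w ws : Ω → Fin N → ℝ, Measurable w ∧ Measurable ws ∧
        (∀ ω ∈ Ω1, (∀ i, 0 < w ω i) ∧ enorm' (w ω) = 1 ∧
          (∀ i, 0 < ws ω i) ∧ enorm' (ws ω) = 1) ∧
        ∃ F : Ω → Set (Fin N → ℝ),
          (∀ ω, F ω = {u : Fin N → ℝ | ∑ i, u i * ws ω i = 0}) ∧
          ∃ lam : ℝ, ∃ σ : EReal, 0 < σ ∧
            -- (i)
            (∀ ω ∈ Ω1, (fun u => (S ω).mulVec u) ''
                ((Submodule.span ℝ {w ω} : Submodule ℝ (Fin N → ℝ)) : Set (Fin N → ℝ)) =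
              ((Submodule.span ℝ {w (θ ω)} : Submodule ℝ (Fin N → ℝ)) : Set (Fin N → ℝ))) ∧
            (∀ ω ∈ Ω1, (fun u => (S ω).mulVec u) '' F ω = F (θ ω)) ∧
            -- (ii)
            (∀ ω ∈ Ω1, F ω ∩ {u : Fin N → ℝ | ∀ i, 0 ≤ u i} = {0}) ∧
            -- (iii)
            (∀ ω ∈ Ω1, Tendsto (fun n : ℕ => (n : ℝ)⁻¹ *
                Real.log (enorm' ((Sprod θ S n ω).mulVec (w ω)))) atTop (nhds lam)) ∧
            (∀ ω ∈ Ω1, ∀ u : Fin N → ℝ, u ≠ 0 →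
              limsup (fun n : ℕ => (((n : ℝ)⁻¹ *
                Real.log (enorm' ((Sprod θ S n ω).mulVec u))) : EReal)) atTop
                ≤ (lam : EReal)) ∧
            -- (iv)
            (∀ ω ∈ Ω1, Tendsto (fun n : ℕ => (((n : ℝ)⁻¹ *
                (Real.log (restrNorm (Sprod θ S n ω) (F ω)) -
                 Real.log (enorm' ((Sprod θ S n ω).mulVec (w ω))))) : EReal))
                atTop (nhds (-σ))) := by
  obtain rfl : S = fun ω => leslie (m ω) (b ω) := funext fun ω => Matrix.ext (hLeslie ω)
  have : NeZero N := ⟨by omega⟩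
  have : Nonempty {j : Fin N // (j : ℕ) + 1 < N} := ⟨⟨⟨0, by omega⟩, hN⟩⟩
  have hpos : ∀ ω i j, 0 < Sprod θ (fun ω => leslie (m ω) (b ω)) N ω i j :=
    fun ω i _ => Sprod_leslie_pos hmpos hbpos (.inl i.isLt) ω
  have hm_le : ∀ ω j, m ω j ≤ max (⨆ j, m ω j) (⨆ j : {j : Fin N // (j : ℕ) + 1 < N}, b ω j.1) :=
    fun ω j => le_max_of_le_left (le_iSup_of_finite (m ω) j)
  refine ⟨hpos, stmt_11_general hN ℙ θ hθinvmeas hθerg _ hSmeas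
    (fun ω => leslie_nonneg (fun j => (hmpos ω j).le) fun j hj => (hbpos ω j hj).le)
    (fun ω => isUnit_leslie (fun j _ => (hmpos ω j).ne') fun j hj => (hbpos ω j hj).ne')
    (NeZero.ne N) hpos (fun ω => ?_) (fun ω j => ?_) (fun ω => ?_) hm0 hM0⟩
  · exact lt_min (iInf_pos_of_finite (hmpos ω)) (iInf_pos_of_finite fun j => hbpos ω j.1 j.2)
  · exact (min_le_left _ _).trans <| (iInf_le_of_finite (m ω) j).trans <|
      le_sum_leslie (fun j => (hmpos ω j).le) (fun j hj => (hbpos ω j hj).le) j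
  · exact leslie_le ((hmpos ω 0).le.trans (hm_le ω 0)) (hm_le ω) fun j hj =>
      le_max_of_le_right <|
        le_iSup_of_finite (fun j : {j : Fin N // (j : ℕ) + 1 < N} => b ω j.1) ⟨j, hj⟩
end
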